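/- arXiv:1803.09416 — 4 statements merged into one kernel-verified Lean document; each statement's English description precedes it below -/
import Mathlib

section
/- Let H be an essentially 2-edge-connected simple graph and let x be a vertex of H with degree at least 2. If the graph obtained from H by deleting x has at most 3 edges, then H has a dominating closed trail that contains x. -/
open SimpleGraph

/-- A dominating closed trail of `H`: a closed walk repeating no edge such that
every edge of `H` has an endpoint in its support. -/
def IsDCT {V : Type*} (H : SimpleGraph V) {v : V} (w : H.Walk v v) : Prop :=
  w.IsTrail ∧ ∀ e ∈ H.edgeSet, ∃ u ∈ w.support, u ∈ e

/-- `H` is essentially 2-edge-connected: it is connected and, for every edge `e`,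
at most one connected component of `H - e` contains an edge (i.e. any two edges
of `H - e` lie in the same component). -/
def EssentiallyTwoEdgeConnected {V : Type*} (H : SimpleGraph V) : Prop :=
  H.Connected ∧ ∀ e ∈ H.edgeSet, ∀ a ∈ (H.deleteEdges {e}).edgeSet,
    ∀ b ∈ (H.deleteEdges {e}).edgeSet,
      ∀ u ∈ a, ∀ w ∈ b, (H.deleteEdges {e}).Reachable u w

/-!
Write `K` for `H - x`. Two distinct neighbours of `x` joined by a path of `K` close up to a cycle
through `x`, and essential 2-edge-connectedness supplies such neighbours in every component of `K`
with an edge.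

If `K` contains a path `a b u v`, then these are all its edges, so `bu` is a bridge of `K`. Both
sides of it attach to `x`, because `ab` and `uv` survive the removal of `bu`. A path of `K` between
such attachments uses `bu`, and its vertices `b` and `u` meet every edge of `K`.

Otherwise take a closed trail `T` at `x` leaving as few edges undominated as possible. If `uv` is
undominated and `T` meets its component in `K`, then some `s` off `T` with a neighbour off `T` is
adjacent to some `t` on `T`; since `T` also uses an edge of `K` at `t`, this gives a path of length
three. So `T` avoids that component, and a cycle from `x` through it can be spliced into `T`.
-/

section General

variable {V : Type*} {G : SimpleGraph V} {a b c u v x : V}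

theorem isTrail_append_of_support_inter {p : G.Walk a b} {q : G.Walk b c} (hp : p.IsTrail)
    (hq : q.IsTrail) (hpq : ∀ z ∈ p.support, z ∈ q.support → z = b) : (p.append q).IsTrail := by
  refine (Walk.isTrail_append p q).2 ⟨hp, hq, fun e hep heq => ?_⟩
  induction e with
  | _ s t =>
    have hs : s = b :=
      hpq s (p.fst_mem_support_of_mem_edges hep) (q.fst_mem_support_of_mem_edges heq)
    have ht : t = b :=
      hpq t (p.snd_mem_support_of_mem_edges hep) (q.snd_mem_support_of_mem_edges heq)
    exact (p.adj_of_mem_edges hep).ne (hs.trans ht.symm)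

theorem edgeSet_eq_of_encard_le_length {p : G.Walk a b} (hp : p.IsTrail)
    (hG : G.edgeSet.encard ≤ p.length) : p.edgeSet = G.edgeSet := by
  classical
  have hcard : p.edgeSet.encard = p.length := by
    rw [← Walk.coe_edges_toFinset, Set.encard_coe_eq_coe_finsetCard,
      List.toFinset_card_of_nodup hp.edges_nodup, Walk.length_edges]
  exact (Set.finite_of_encard_eq_coe hcard).eq_of_subset_of_encard_le
    p.edges_subset_edgeSet (hG.trans hcard.ge)

theorem isBridge_middle_of_isPath {hab : G.Adj a b} {hbu : G.Adj b u} {huv : G.Adj u v}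
    (hp : (Walk.cons hab (.cons hbu (.cons huv .nil))).IsPath)
    (hG : (Walk.cons hab (.cons hbu (.cons huv .nil))).edgeSet = G.edgeSet) :
    G.IsBridge s(b, u) := by
  rw [isBridge_iff]
  rintro ⟨q⟩
  have hnodup : [a, b, u, v].Nodup := hp.support_nodup
  have hu : u ∉ ({a, b} : Set V) := by grind
  obtain ⟨⟨⟨s, t⟩, hst⟩, -, hs, ht⟩ := q.exists_boundary_dart {a, b} (by simp) hu
  rw [deleteEdges_adj, ← mem_edgeSet, ← hG] at hst
  simp only [Walk.edgeSet_cons, Walk.edgeSet_nil, Set.mem_insert_iff, Set.mem_empty_iff_false,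
    Set.mem_singleton_iff, Sym2.eq_iff] at hst hs ht
  grind

theorem encard_edgeSet_deleteIncidenceSet (G : SimpleGraph V) (x : V) :
    (G.deleteIncidenceSet x).edgeSet.encard = (G.induce {w | w ≠ x}).edgeSet.encard := by
  have hsupp : (G.deleteIncidenceSet x).support ⊆ {w | w ≠ x} := fun _ hw =>
    (G.support_deleteIncidenceSet_subset x hw).2
  have hspan := (spanningCoe_induce_eq_self (G := G.deleteIncidenceSet x) _).2 hsupp
  rw [G.induce_deleteIncidenceSet_of_notMem (by simp)] at hspan
  rw [← hspan, edgeSet_map, (Function.Embedding.injective _).encard_image]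

theorem exists_adj_reachable_deleteIncidenceSet (hu : G.Reachable u x) (hux : u ≠ x) :
    ∃ y, G.Adj y x ∧ (G.deleteIncidenceSet x).Reachable u y := by
  obtain ⟨p⟩ := hu
  induction p with
  | nil => exact absurd rfl hux
  | @cons s t x hst p ih =>
    obtain rfl | htx := eq_or_ne t x
    · exact ⟨s, hst, .refl s⟩
    · obtain ⟨y, hyx, hty⟩ := ih htx
      have hst' : (G.deleteIncidenceSet x).Adj s t := deleteIncidenceSet_adj.2 ⟨hst, hux, htx⟩
      exact ⟨y, hyx, hst'.reachable.trans hty⟩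

theorem notMem_support_of_walk_deleteIncidenceSet (p : (G.deleteIncidenceSet x).Walk a b)
    (ha : a ≠ x) : x ∉ p.support := by
  induction p with
  | nil => simpa using ha.symm
  | cons h p ih =>
    simpa [ha.symm] using ih (deleteIncidenceSet_adj.1 h).2.2

theorem exists_isCycle_of_isPath_deleteIncidenceSet {p : (G.deleteIncidenceSet x).Walk a b}
    (hp : p.IsPath) (hab : a ≠ b) (ha : G.Adj a x) (hb : G.Adj b x) :
    ∃ w : G.Walk x x, w.IsCycle ∧ ∀ z, z ∈ w.support ↔ z = x ∨ z ∈ p.support := by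
  have hx : x ∉ p.support := notMem_support_of_walk_deleteIncidenceSet p ha.ne
  let q : G.Walk a b := p.mapLe (G.deleteIncidenceSet_le x)
  have hq : q.support = p.support := Walk.support_mapLe_eq_support _ p
  refine ⟨.cons ha.symm (q.concat hb), ?_, fun z => ?_⟩
  · refine (Walk.cons_isCycle_iff _ _).2 ⟨(hp.mapLe _).concat (hq ▸ hx) hb, ?_⟩
    rw [Walk.edges_concat, List.concat_eq_append, List.mem_append, List.mem_singleton, not_or]
    exact ⟨fun h => hx (hq ▸ q.fst_mem_support_of_mem_edges h), by grind [hb.ne]⟩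
  · rw [Walk.support_cons, Walk.support_concat, hq]
    grind

theorem exists_mem_support_adj_deleteIncidenceSet {w : G.Walk x x} (hw : w.IsTrail)
    (hc : c ∈ w.support) (hcx : c ≠ x) : ∃ r ∈ w.support, (G.deleteIncidenceSet x).Adj c r := by
  classical
  obtain ⟨p, q, rfl⟩ := Walk.mem_support_iff_exists_append.1 hc
  have hp : ¬ p.Nil := fun h => hcx h.eq.symm
  have hq : ¬ q.Nil := fun h => hcx h.eq
  have hpen := p.mk_penultimate_end_mem_edges hp
  have hsnd := q.mk_start_snd_mem_edges hq
  simp only [deleteIncidenceSet_adj, Walk.mem_support_append_iff]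
  by_cases hqx : q.snd = x
  · refine ⟨p.penultimate, .inl (p.fst_mem_support_of_mem_edges hpen),
      (p.adj_penultimate hp).symm, hcx, fun hpx => ?_⟩
    have hdisj := ((Walk.isTrail_append p q).1 hw).2.2
    have hsame : s(p.penultimate, c) = s(c, q.snd) := by rw [hpx, hqx, Sym2.eq_swap]
    exact hdisj hpen (hsame ▸ hsnd)
  · exact ⟨q.snd, .inr (q.snd_mem_support_of_mem_edges hsnd), q.adj_snd hq, hcx, hqx⟩

theorem exists_isPath_length_eq_three_of_notMem_support {w : G.Walk x x} (hw : w.IsTrail) {t : V}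
    (huv : (G.deleteIncidenceSet x).Adj u v) (hu : u ∉ w.support) (hv : v ∉ w.support)
    (hut : (G.deleteIncidenceSet x).Reachable u t) (ht : t ∈ w.support) :
    ∃ (a b : V) (p : (G.deleteIncidenceSet x).Walk a b), p.IsPath ∧ p.length = 3 := by
  obtain ⟨p⟩ := hut
  let S : Set V := {s | s ∉ w.support ∧ ∃ r ∉ w.support, (G.deleteIncidenceSet x).Adj s r}
  obtain ⟨⟨⟨s, t⟩, hst⟩, -, ⟨hs, r, hr, hsr⟩, htS⟩ :=
    p.exists_boundary_dart S ⟨hu, v, hv, huv⟩ fun h => h.1 ht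
  have ht : t ∈ w.support := by_contra fun ht => htS ⟨ht, s, hs, hst.symm⟩
  obtain ⟨q, hq, htq⟩ :=
    exists_mem_support_adj_deleteIncidenceSet hw ht (deleteIncidenceSet_adj.1 hst).2.2
  have hnodup : [r, s, t, q].Nodup := by grind [hsr.ne, htq.ne]
  exact ⟨r, q, .cons hsr.symm (.cons hst (.cons htq .nil)), (Walk.isPath_def _).2 hnodup, rfl⟩

end General

section Domination

variable {V : Type*} {H : SimpleGraph V} {u v x y z : V}

/-- The edges of `H` that a walk fails to dominate; a trail is a dominating closed trail when this
set is empty, and it measures how far a closed trail is from that. -/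
def undominatedEdges (w : H.Walk u v) : Set (Sym2 V) :=
  {e ∈ H.edgeSet | ∀ z ∈ w.support, z ∉ e}

theorem isDCT_iff_undominatedEdges_eq_empty {w : H.Walk x x} :
    IsDCT H w ↔ w.IsTrail ∧ undominatedEdges w = ∅ := by
  simp [IsDCT, undominatedEdges, Set.eq_empty_iff_forall_notMem]

theorem undominatedEdges_subset_of_mem_support {w : H.Walk u v} (hx : x ∈ w.support) :
    undominatedEdges w ⊆ (H.deleteIncidenceSet x).edgeSet := by
  rintro e ⟨he, hw⟩
  rw [edgeSet_deleteIncidenceSet]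
  exact ⟨he, fun hxe => hw x hx hxe.2⟩

theorem exists_isTrail_undominatedEdges_ssubset {w : H.Walk x x} (hw : w.IsTrail)
    (hy : H.Adj y x) (hz : H.Adj z x) (hyz : y ≠ z)
    (hreach : (H.deleteIncidenceSet x).Reachable y z)
    (havoid : ∀ t, (H.deleteIncidenceSet x).Reachable y t → t ∉ w.support) :
    ∃ w' : H.Walk x x, w'.IsTrail ∧ undominatedEdges w' ⊂ undominatedEdges w := by
  obtain ⟨p, hp⟩ := hreach.exists_isPath
  obtain ⟨c, hc, hsupp⟩ := exists_isCycle_of_isPath_deleteIncidenceSet hp hyz hy hz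
  refine ⟨w.append c, isTrail_append_of_support_inter hw hc.isTrail fun t htw htc => ?_, ?_⟩
  · refine ((hsupp t).1 htc).resolve_right fun htp => ?_
    obtain ⟨q, -, -⟩ := Walk.mem_support_iff_exists_append.1 htp
    exact havoid t q.reachable htw
  · have hadj : (H.deleteIncidenceSet x).Adj y p.snd := p.adj_snd (Walk.not_nil_of_ne hyz)
    have hsub : undominatedEdges (w.append c) ⊆ undominatedEdges w := fun e he =>
      ⟨he.1, fun t ht => he.2 t ((Walk.mem_support_append_iff w c).2 (.inl ht))⟩
    have hyc : y ∈ (w.append c).support :=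
      (Walk.mem_support_append_iff w c).2 (.inr ((hsupp y).2 (.inr p.start_mem_support)))
    refine (Set.ssubset_iff_of_subset hsub).2 ⟨s(y, p.snd),
      ⟨(deleteIncidenceSet_adj.1 hadj).1, fun t ht hte => ?_⟩, fun h => h.2 y hyc (by simp)⟩
    obtain rfl | rfl := Sym2.mem_iff.1 hte
    · exact havoid _ (.refl _) ht
    · exact havoid _ hadj.reachable ht

end Domination

namespace EssentiallyTwoEdgeConnected

variable {V : Type*} {H : SimpleGraph V} {e : Sym2 V} {a b u v x : V}

theorem reachable_deleteEdges (hH : EssentiallyTwoEdgeConnected H)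
    (hdeg : (H.neighborSet x).Nontrivial) (he : e ∈ H.edgeSet) (huv : H.Adj u v)
    (hne : s(u, v) ≠ e) : (H.deleteEdges {e}).Reachable u x := by
  obtain ⟨y, hy, z, hz, hyz⟩ := hdeg
  obtain ⟨t, ht, hte⟩ : ∃ t, H.Adj x t ∧ s(x, t) ≠ e := by
    by_cases hye : s(x, y) = e
    · exact ⟨z, hz, fun hze => hyz (Sym2.congr_right.1 (hye.trans hze.symm))⟩
    · exact ⟨y, hy, hye⟩
  exact hH.2 e he s(u, v) (by simp [huv, hne]) s(x, t) (by simp [ht, hte]) u (by simp) x (by simp)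

theorem exists_adj_reachable (hH : EssentiallyTwoEdgeConnected H)
    (hdeg : (H.neighborSet x).Nontrivial) (he : e ∈ H.edgeSet) (huv : H.Adj u v)
    (hne : s(u, v) ≠ e) (hux : u ≠ x) :
    ∃ y, H.Adj y x ∧ s(y, x) ≠ e ∧
      ((H.deleteIncidenceSet x).deleteEdges {e}).Reachable u y := by
  obtain ⟨y, hyx, huy⟩ :=
    exists_adj_reachable_deleteIncidenceSet (hH.reachable_deleteEdges hdeg he huv hne) hux
  rw [deleteEdges_adj] at hyx
  refine ⟨y, hyx.1, hyx.2, huy.mono fun s t hst => ?_⟩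
  simp only [deleteIncidenceSet_adj, deleteEdges_adj] at hst ⊢
  tauto

theorem exists_ne_adj_reachable (hH : EssentiallyTwoEdgeConnected H)
    (hdeg : (H.neighborSet x).Nontrivial) (huv : (H.deleteIncidenceSet x).Adj u v) :
    ∃ y z, y ≠ z ∧ H.Adj y x ∧ H.Adj z x ∧
      (H.deleteIncidenceSet x).Reachable u y ∧ (H.deleteIncidenceSet x).Reachable u z := by
  obtain ⟨huv, hux, hvx⟩ := deleteIncidenceSet_adj.1 huv
  obtain ⟨y, hy, huy⟩ := exists_adj_reachable_deleteIncidenceSet (hH.1.preconnected u x) hux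
  obtain ⟨z, hz, hze, huz⟩ := hH.exists_adj_reachable hdeg (e := s(y, x)) hy huv
    (by simp only [ne_eq, Sym2.eq_iff]; tauto) hux
  exact ⟨y, z, fun hyz => hze (hyz ▸ rfl), hy, hz, huy, huz.mono (deleteEdges_le _)⟩

theorem exists_isCycle_of_isBridge
    (hH : EssentiallyTwoEdgeConnected H) (hdeg : (H.neighborSet x).Nontrivial)
    (hab : (H.deleteIncidenceSet x).Adj a b) (hbu : (H.deleteIncidenceSet x).Adj b u)
    (huv : (H.deleteIncidenceSet x).Adj u v) (hau : a ≠ u) (hbv : b ≠ v)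
    (hbridge : (H.deleteIncidenceSet x).IsBridge s(b, u)) :
    ∃ w : H.Walk x x, w.IsCycle ∧ b ∈ w.support ∧ u ∈ w.support := by
  have he : s(b, u) ∈ H.edgeSet := (deleteIncidenceSet_adj.1 hbu).1
  obtain ⟨hab, -, hbx⟩ := deleteIncidenceSet_adj.1 hab
  obtain ⟨huv, hux, -⟩ := deleteIncidenceSet_adj.1 huv
  obtain ⟨y, hy, -, hby⟩ := hH.exists_adj_reachable hdeg he hab.symm
    (fun h => hau (Sym2.congr_right.1 h)) hbx
  obtain ⟨z, hz, -, huz⟩ := hH.exists_adj_reachable hdeg he huv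
    (fun h => hbv (Sym2.congr_right.1 (h.trans Sym2.eq_swap)).symm) hux
  rw [isBridge_iff] at hbridge
  have hyz_sep : ¬ ((H.deleteIncidenceSet x).deleteEdges {s(b, u)}).Reachable y z := fun h =>
    hbridge (hby.trans (h.trans huz.symm))
  have hyz : (H.deleteIncidenceSet x).Reachable y z :=
    (hby.symm.mono (deleteEdges_le _)).trans
      (hbu.reachable.trans (huz.mono (deleteEdges_le _)))
  obtain ⟨p, hp⟩ := hyz.exists_isPath
  have hmem : s(b, u) ∈ p.edges := by_contra fun h =>
    hyz_sep (reachable_deleteEdges_iff_exists_walk.2 ⟨p, h⟩)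
  obtain ⟨w, hw, hsupp⟩ := exists_isCycle_of_isPath_deleteIncidenceSet hp
    (fun h => hyz_sep (h ▸ .refl y)) hy hz
  exact ⟨w, hw, (hsupp b).2 (.inr (p.fst_mem_support_of_mem_edges hmem)),
    (hsupp u).2 (.inr (p.snd_mem_support_of_mem_edges hmem))⟩

theorem exists_isDCT_of_isPath_length_eq_three
    (hH : EssentiallyTwoEdgeConnected H) (hdeg : (H.neighborSet x).Nontrivial)
    (hfew : (H.deleteIncidenceSet x).edgeSet.encard ≤ 3) {p : (H.deleteIncidenceSet x).Walk a v}
    (hp : p.IsPath) (hlen : p.length = 3) : ∃ w : H.Walk x x, IsDCT H w := by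
  have hedges := edgeSet_eq_of_encard_le_length hp.isTrail (by rwa [hlen])
  match p, hlen with
  | .cons (v := b) hab (.cons (v := u) hbu (.cons huv .nil)), _ =>
    have hbridge := isBridge_middle_of_isPath hp hedges
    have hnodup : [a, b, u, v].Nodup := hp.support_nodup
    obtain ⟨w, hw, hb, hu⟩ :=
      hH.exists_isCycle_of_isBridge hdeg hab hbu huv (by grind) (by grind) hbridge
    refine ⟨w, isDCT_iff_undominatedEdges_eq_empty.2 ⟨hw.isTrail, ?_⟩⟩
    refine Set.eq_empty_of_forall_notMem fun e he => ?_
    have hcases : e ∈ Walk.edgeSet _ :=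
      hedges ▸ undominatedEdges_subset_of_mem_support w.start_mem_support he
    simp only [Walk.edgeSet_cons, Walk.edgeSet_nil, Set.mem_insert_iff,
      Set.mem_empty_iff_false, or_false] at hcases
    obtain rfl | rfl | rfl := hcases
    · exact he.2 b hb (by simp)
    · exact he.2 b hb (by simp)
    · exact he.2 u hu (by simp)

theorem exists_isDCT_of_forall_isPath_length_ne_three
    (hH : EssentiallyTwoEdgeConnected H) (hdeg : (H.neighborSet x).Nontrivial)
    (hfin : (H.deleteIncidenceSet x).edgeSet.Finite)
    (hP : ∀ (a b : V) (p : (H.deleteIncidenceSet x).Walk a b), p.IsPath → p.length ≠ 3) :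
    ∃ w : H.Walk x x, IsDCT H w := by
  obtain ⟨w, hw, hmin⟩ := exists_minimalFor_of_wellFoundedLT (fun w : H.Walk x x => w.IsTrail)
    (fun w => (undominatedEdges w).ncard) ⟨.nil, .nil⟩
  refine ⟨w, isDCT_iff_undominatedEdges_eq_empty.2 ⟨hw, ?_⟩⟩
  refine Set.eq_empty_of_forall_notMem fun e he => ?_
  induction e with
  | _ u v =>
    have huv : (H.deleteIncidenceSet x).Adj u v :=
      undominatedEdges_subset_of_mem_support w.start_mem_support he
    obtain ⟨y, z, hyz, hy, hz, huy, huz⟩ := hH.exists_ne_adj_reachable hdeg huv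
    have havoid : ∀ t, (H.deleteIncidenceSet x).Reachable y t → t ∉ w.support := by
      intro t hyt ht
      obtain ⟨a, b, p, hp, hlen⟩ := exists_isPath_length_eq_three_of_notMem_support hw huv
        (fun hu => he.2 u hu (by simp)) (fun hv => he.2 v hv (by simp)) (huy.trans hyt) ht
      exact hP a b p hp hlen
    obtain ⟨w', hw', hlt⟩ :=
      exists_isTrail_undominatedEdges_ssubset hw hy hz hyz (huy.symm.trans huz) havoid
    have hcard := Set.ncard_lt_ncard hlt
      (hfin.subset (undominatedEdges_subset_of_mem_support w.start_mem_support))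
    exact hcard.not_ge (hmin hw' hcard.le)

end EssentiallyTwoEdgeConnected

theorem dct_through_vertex_general {V : Type*} {H : SimpleGraph V}
    (hH : EssentiallyTwoEdgeConnected H) {x : V} (hdeg : (H.neighborSet x).Nontrivial)
    (hfew : (H.induce {w | w ≠ x}).edgeSet.encard ≤ 3) : ∃ w : H.Walk x x, IsDCT H w := by
  rw [← encard_edgeSet_deleteIncidenceSet] at hfew
  by_cases hP : ∃ (a b : V) (p : (H.deleteIncidenceSet x).Walk a b), p.IsPath ∧ p.length = 3
  · obtain ⟨a, b, p, hp, hlen⟩ := hP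
    exact hH.exists_isDCT_of_isPath_length_eq_three hdeg hfew hp hlen
  · push Not at hP
    exact hH.exists_isDCT_of_forall_isPath_length_ne_three hdeg
      (Set.finite_of_encard_le_coe hfew) hP

/-- If `H` is essentially 2-edge-connected, `x` has degree at least 2, and `H - x`
has at most 3 edges, then `H` has a dominating closed trail through `x`. -/
theorem dct_through_vertex {V : Type*} [Fintype V] (H : SimpleGraph V)
    (hH : EssentiallyTwoEdgeConnected H) (x : V)
    (hdeg : 2 ≤ (H.neighborSet x).ncard)
    (hfew : ((H.induce {w | w ≠ x}).edgeSet).ncard ≤ 3) :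
    ∃ (v : V) (w : H.Walk v v), IsDCT H w ∧ x ∈ w.support := by
  have hfew' : (H.induce {w | w ≠ x}).edgeSet.encard ≤ 3 := by
    rw [← (Set.toFinite _).cast_ncard_eq]
    exact_mod_cast hfew
  obtain ⟨w, hw⟩ := dct_through_vertex_general hH (Set.one_lt_ncard_iff_nontrivial.1 hdeg) hfew'
  exact ⟨x, w, hw, w.start_mem_support⟩
end

section
/- Let H be an essentially 2-edge-connected simple graph and let Ξ be a collapsible subgraph of H. If the graph obtained from H by deleting all vertices of Ξ has at most 3 edges, then H has a dominating closed trail. -/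
open SimpleGraph

/-- A graph with at least two vertices is collapsible if for every vertex subset `S`
of even (finite) cardinality there is a spanning connected subgraph whose set of
odd-degree vertices is exactly `S`. -/
def Collapsible {W : Type*} (Ξ : SimpleGraph W) : Prop :=
  2 ≤ Nat.card W ∧ ∀ S : Set W, S.Finite → Even S.ncard →
    ∃ F : SimpleGraph W, F ≤ Ξ ∧ F.Connected ∧
      ∀ v : W, (Odd (F.neighborSet v).ncard ↔ v ∈ S)

/-!
Let `K` be the vertex set of the collapsible subgraph, contracted to a single point, and let `D` be
an element of the cycle space of `H / K`. The vertices of odd degree in `D` lie in `K` and are even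
in number, so collapsibility provides a connected spanning graph of `K` correcting these parities.
If every component of `D` meets `K`, the union is connected and even, and its Euler tour is a
dominating closed trail as soon as the vertices touched by `D` cover the edges of `H - K`.

To find `D`, note that essential 2-edge-connectivity puts every vertex outside `K` of degree at
least two on a non-bridge edge, hence on a cycle, and that two vertices touched by elements of the
cycle space are touched by one of the two elements or by their symmetric difference. If some vertex
has degree at least two in `H - K`, that vertex and at most one further one cover the at most three
edges; otherwise `H - K` is a matching and suitable elements for its edges are glued together.
Finally, a component of `D` that avoids `K` has to be a triangle containing all edges of `H - K`.
Then a cycle through an edge from this triangle to `K` is used instead, after adding `D` to it if it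
contains no edge of the triangle.
-/

section Cardinality

theorem eq_of_ncard_le_three {α : Type*} {s : Set α} (hs : s.Finite) (hcard : s.ncard ≤ 3)
    {a b c : α} (ha : a ∈ s) (hb : b ∈ s) (hc : c ∈ s) (hab : a ≠ b) (hac : a ≠ c) (hbc : b ≠ c) :
    s = {a, b, c} := by
  refine (Set.eq_of_subset_of_ncard_le ?_ ?_ hs).symm
  · rintro _ (rfl | rfl | rfl) <;> assumption
  · rwa [Set.ncard_eq_three.2 ⟨a, b, c, hab, hac, hbc, rfl⟩]

theorem even_ncard_symmDiff {α : Type*} {s t : Set α} (hs : s.Finite) (ht : t.Finite)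
    (hse : Even s.ncard) (hte : Even t.ncard) : Even (symmDiff s t).ncard := by
  rw [Set.symmDiff_def, Set.ncard_union_eq disjoint_sdiff_sdiff hs.sdiff ht.sdiff]
  have hs_split := Set.ncard_inter_add_ncard_sdiff_eq_ncard s t hs
  have ht_split := Set.ncard_inter_add_ncard_sdiff_eq_ncard t s ht
  rw [Set.inter_comm] at ht_split
  grind

variable {V : Type*}

theorem ncard_neighborSet_eq_degree (G : SimpleGraph V) (v : V) [Fintype (G.neighborSet v)] :
    (G.neighborSet v).ncard = G.degree v := by
  rw [← card_neighborSet_eq_degree, ← Nat.card_eq_fintype_card, Nat.card_coe_set_eq]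

theorem even_ncard_setOf_odd_ncard_neighborSet [Finite V] (G : SimpleGraph V) :
    Even {v | Odd (G.neighborSet v).ncard}.ncard := by
  classical
  have := Fintype.ofFinite V
  rw [Set.ncard_eq_toFinset_card']
  convert G.even_card_odd_degree_vertices using 2
  ext v
  simp only [Set.mem_toFinset, Set.mem_ofPred_eq, Finset.mem_filter, Finset.mem_univ, true_and,
    ncard_neighborSet_eq_degree]

theorem even_ncard_neighborSet_of_isCycles {G : SimpleGraph V} (hG : G.IsCycles) (v : V) :
    Even (G.neighborSet v).ncard := by
  obtain hv | hv := (G.neighborSet v).eq_empty_or_nonempty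
  · simp only [hv, Set.ncard_empty, Even.zero]
  · simp only [hG hv, even_two]

end Cardinality

section Trails

variable {V : Type*} {G : SimpleGraph V}

theorem exists_adj_notMem_edges_of_isTrail {u v : V} [Finite (G.neighborSet u)] {p : G.Walk u v}
    (hp : p.IsTrail) (huv : u ≠ v) (hu : Even (G.neighborSet u).ncard) :
    ∃ x, G.Adj u x ∧ s(u, x) ∉ p.edges := by
  classical
  have := Fintype.ofFinite (G.neighborSet u)
  by_contra! hall
  have hcount : (p.edges.countP fun e => u ∈ e) = (G.neighborSet u).ncard := by
    rw [ncard_neighborSet_eq_degree, ← card_incidenceFinset_eq_degree,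
      List.countP_eq_length_filter, ← List.toFinset_card_of_nodup (hp.edges_nodup.filter _)]
    congr 1
    ext e
    simp only [List.mem_toFinset, List.mem_filter, decide_eq_true_eq, mem_incidenceFinset]
    refine ⟨fun h => ⟨p.edges_subset_edgeSet h.1, h.2⟩, fun h => ⟨?_, h.2⟩⟩
    obtain ⟨x, rfl⟩ := Sym2.mem_iff_exists.mp h.2
    exact hall x h.1
  rw [← hcount, hp.even_countP_edges_iff] at hu
  exact (hu huv).1 rfl

theorem exists_longest_isTrail_of_reachable (G : SimpleGraph V) [Finite G.edgeSet] (r : V) :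
    ∃ (u v : V) (p : G.Walk u v), (p.IsTrail ∧ G.Reachable r u) ∧
      ∀ {a b : V} (q : G.Walk a b), q.IsTrail → G.Reachable r a → q.length ≤ p.length := by
  have := Fintype.ofFinite G.edgeSet
  let lengths : Set ℕ :=
    {n | ∃ (u v : V) (p : G.Walk u v), (p.IsTrail ∧ G.Reachable r u) ∧ p.length = n}
  have hne : lengths.Nonempty := ⟨0, r, r, Walk.nil, ⟨Walk.IsTrail.nil, .rfl⟩, rfl⟩
  have hbdd : BddAbove lengths := by
    refine ⟨G.edgeFinset.card, ?_⟩
    rintro _ ⟨u, v, p, ⟨hp, -⟩, rfl⟩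
    exact hp.length_le_card_edgeFinset
  obtain ⟨u, v, p, hp, hlen⟩ := Nat.sSup_mem hne hbdd
  refine ⟨u, v, p, hp, fun q hq hr => ?_⟩
  rw [hlen]
  exact le_csSup hbdd ⟨_, _, q, ⟨hq, hr⟩, rfl⟩

theorem exists_closed_isTrail_of_even_ncard_neighborSet [Finite V]
    (heven : ∀ v, Even (G.neighborSet v).ncard) (r : V) :
    ∃ (v : V) (p : G.Walk v v), p.IsTrail ∧ ∀ u, G.Reachable r u → u ∈ p.support := by
  classical
  obtain ⟨u, v, p, ⟨hp, hru⟩, hmax⟩ := exists_longest_isTrail_of_reachable G r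
  have not_extendable {a b c : V} (q : G.Walk b c) (hq : q.IsTrail) (hqp : q.length = p.length)
      (hab : G.Adj a b) (hrb : G.Reachable r b) : s(a, b) ∈ q.edges := by
    by_contra hnew
    have := hmax (.cons hab q) (Walk.isTrail_cons .. |>.2 ⟨hq, hnew⟩) (hrb.trans hab.symm.reachable)
    rw [Walk.length_cons] at this
    omega
  obtain rfl : u = v := by
    by_contra huv
    obtain ⟨x, hux, hx⟩ := exists_adj_notMem_edges_of_isTrail hp huv (heven u)
    exact hx (Sym2.eq_swap ▸ not_extendable p hp rfl hux.symm hru)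
  refine ⟨u, p, hp, fun w hw => ?_⟩
  by_contra hwp
  obtain ⟨q⟩ := hru.symm.trans hw
  obtain ⟨d, -, hfst, hsnd⟩ := q.exists_boundary_dart {x | x ∈ p.support} p.start_mem_support hwp
  have hmem := not_extendable (p.rotate d.fst hfst) ((p.isTrail_rotate hfst).2 hp)
    (p.length_rotate ..) d.adj.symm (hru.trans ⟨p.takeUntil _ hfst⟩)
  exact hsnd ((p.mem_support_rotate_iff ..).1 (Walk.fst_mem_support_of_mem_edges _ hmem))

end Trails

/-- `H - K`, kept on the vertex type of `H`. -/
def outerGraph {V : Type*} (H : SimpleGraph V) (K : Set V) : SimpleGraph V :=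
  (H.induce Kᶜ).spanningCoe

/-- `D` is an element of the cycle space of the contraction `H / K`, encoded as a subgraph of `H`
without edges inside `K` whose degrees are even at every vertex outside `K`. -/
structure IsEvenOutside {V : Type*} (H : SimpleGraph V) (K : Set V) (D : SimpleGraph V) :
    Prop where
  le : D ≤ H.deleteEdges K.sym2
  even : ∀ v ∉ K, Even (D.neighborSet v).ncard

/-- Every nontrivial component of `D` meets `K`: together with a connected graph on `K`, the
edges of `D` then form a connected graph. -/
def IsAnchored {V : Type*} (K : Set V) (D : SimpleGraph V) : Prop :=
  ∀ u ∈ D.support, ∃ k ∈ K, D.Reachable u k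

section OuterGraph

variable {V : Type*} {H : SimpleGraph V} {K : Set V}

theorem outerGraph_adj {a b : V} : (outerGraph H K).Adj a b ↔ H.Adj a b ∧ a ∉ K ∧ b ∉ K := by
  simp only [outerGraph, map_adj, comap_adj, Function.Embedding.subtype_apply, Subtype.exists,
    Set.mem_compl_iff]
  grind

theorem ncard_edgeSet_outerGraph :
    (outerGraph H K).edgeSet.ncard = (H.induce Kᶜ).edgeSet.ncard := by
  rw [outerGraph, edgeSet_map, Set.ncard_image_of_injective _ (Function.Embedding.injective _)]

end OuterGraph

namespace IsEvenOutside

variable {V : Type*} {H : SimpleGraph V} {K : Set V} {A B D : SimpleGraph V}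

theorem adj (hD : IsEvenOutside H K D) {a b : V} (hab : D.Adj a b) : H.Adj a b :=
  deleteEdges_le _ (hD.le hab)

theorem not_adj (hD : IsEvenOutside H K D) {a b : V} (ha : a ∈ K) (hb : b ∈ K) : ¬ D.Adj a b :=
  fun hab => ((deleteEdges_adj ..).1 (hD.le hab)).2 ⟨ha, hb⟩

theorem adj_outerGraph (hD : IsEvenOutside H K D) {a b : V} (ha : a ∉ K) (hb : b ∉ K)
    (hab : D.Adj a b) : (outerGraph H K).Adj a b :=
  outerGraph_adj.2 ⟨hD.adj hab, ha, hb⟩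

protected theorem bot : IsEvenOutside H K ⊥ where
  le := bot_le
  even v _ := by simp only [neighborSet_bot, Set.ncard_empty, Even.zero]

protected theorem symmDiff [Finite V] (hA : IsEvenOutside H K A) (hB : IsEvenOutside H K B) :
    IsEvenOutside H K (symmDiff A B) where
  le := symmDiff_le_sup.trans (sup_le hA.le hB.le)
  even v hv := even_ncard_symmDiff (Set.toFinite _) (Set.toFinite _) (hA.even v hv) (hB.even v hv)

theorem exists_adj_ne [Finite V] (hD : IsEvenOutside H K D) {v a : V} (hv : v ∉ K)
    (hva : D.Adj v a) : ∃ b, D.Adj v b ∧ b ≠ a :=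
  Set.exists_ne_of_one_lt_ncard
    (Set.one_lt_ncard_of_nonempty_of_even (Set.toFinite _) ⟨a, hva⟩ (hD.even v hv)) a

theorem deleteEdges_sym2_of_isCycles (hA : A.IsCycles) (hAH : A ≤ H) :
    IsEvenOutside H K (A.deleteEdges K.sym2) where
  le := deleteEdges_mono hAH
  even v hv := by
    have : (A.deleteEdges K.sym2).neighborSet v = A.neighborSet v := by
      ext w
      simp only [mem_neighborSet, deleteEdges_adj, Set.mk_mem_sym2_iff, hv, false_and,
        not_false_eq_true, and_true]
    rw [this]
    exact even_ncard_neighborSet_of_isCycles hA v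

-- An edge of `D a` that leaves the component of `a` in `H - K` ends in `K`, where parity is not
-- constrained, so the choices made for different components do not interact.
theorem exists_glue {D : V → SimpleGraph V} (hD : ∀ v ∉ K, IsEvenOutside H K (D v))
    (hconst : ∀ a b, (outerGraph H K).Adj a b → D a = D b) :
    ∃ E, IsEvenOutside H K E ∧ ∀ v ∉ K, E.neighborSet v = (D v).neighborSet v := by
  let E : SimpleGraph V := .fromRel fun a b => a ∉ K ∧ (D a).Adj a b
  have hE : ∀ v ∉ K, E.neighborSet v = (D v).neighborSet v := by
    intro v hv
    ext w
    refine ⟨?_, fun h => ⟨h.ne, .inl ⟨hv, h⟩⟩⟩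
    rintro ⟨-, ⟨-, h⟩ | ⟨hw, h⟩⟩
    · exact h
    · rw [← hconst w v ((hD w hw).adj_outerGraph hw hv h)]
      exact h.symm
  refine ⟨E, ⟨?_, fun v hv => hE v hv ▸ (hD v hv).even v hv⟩, hE⟩
  rintro a b ⟨-, ⟨ha, h⟩ | ⟨hb, h⟩⟩
  · exact (hD a ha).le h
  · exact (hD b hb).le h.symm

theorem exists_mem_support_of_mem_support [Finite V] (hA : IsEvenOutside H K A)
    (hB : IsEvenOutside H K B) {u v : V} (hu : u ∈ A.support) (hv : v ∈ B.support) :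
    ∃ D, IsEvenOutside H K D ∧ u ∈ D.support ∧ v ∈ D.support := by
  by_cases hvA : v ∈ A.support
  · exact ⟨A, hA, hu, hvA⟩
  by_cases huB : u ∈ B.support
  · exact ⟨B, hB, huB, hv⟩
  obtain ⟨a, hua⟩ := hu
  obtain ⟨b, hvb⟩ := hv
  exact ⟨symmDiff A B, hA.symmDiff hB, ⟨a, .inl ⟨hua, fun h => huB ⟨a, h⟩⟩⟩,
    ⟨b, .inr ⟨hvb, fun h => hvA ⟨b, h⟩⟩⟩⟩

theorem exists_triangle_of_not_reachable [Finite V] (hD : IsEvenOutside H K D)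
    (hcard : (outerGraph H K).edgeSet.ncard ≤ 3) {u : V} (hu : u ∈ D.support)
    (hno : ∀ k ∈ K, ¬ D.Reachable u k) :
    ∃ p q, D.Adj u p ∧ D.Adj u q ∧ (outerGraph H K).edgeSet = {s(u, p), s(u, q), s(p, q)} := by
  have notMem {x : V} (hx : D.Reachable u x) : x ∉ K := fun hxK => hno x hxK hx
  have outer {x y : V} (hx : D.Reachable u x) (hxy : D.Adj x y) : (outerGraph H K).Adj x y :=
    hD.adj_outerGraph (notMem hx) (notMem (hx.trans hxy.reachable)) hxy
  obtain ⟨p, hup⟩ := hu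
  obtain ⟨q, huq, hqp⟩ := hD.exists_adj_ne (notMem .rfl) hup
  obtain ⟨r, hpr, hru⟩ := hD.exists_adj_ne (notMem hup.reachable) hup.symm
  obtain ⟨r', hqr', hru'⟩ := hD.exists_adj_ne (notMem huq.reachable) huq.symm
  have hup_ne := hup.ne
  have huq_ne := huq.ne
  have hedges : (outerGraph H K).edgeSet = {s(u, p), s(u, q), s(p, r)} :=
    eq_of_ncard_le_three (Set.toFinite _) hcard (outer .rfl hup) (outer .rfl huq)
      (outer hup.reachable hpr) (by grind) (by grind) (by grind)
  have hr'_mem : s(q, r') ∈ (outerGraph H K).edgeSet := outer huq.reachable hqr'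
  obtain rfl : r = q := by
    rw [hedges] at hr'_mem
    simp only [Set.mem_insert_iff, Set.mem_singleton_iff, Sym2.eq_iff] at hr'_mem
    grind
  exact ⟨p, r, hup, huq, hedges⟩

end IsEvenOutside

section Bridges

variable {V : Type*} {H : SimpleGraph V} {K : Set V}

theorem exists_isEvenOutside_adj {x b : V} (hx : x ∉ K) (hxb : H.Adj x b)
    (hbridge : ¬ H.IsBridge s(x, b)) : ∃ D, IsEvenOutside H K D ∧ D.Adj x b := by
  rw [isBridge_iff, not_not] at hbridge
  obtain ⟨u, c, hc, hmem⟩ := adj_and_reachable_delete_edges_iff_exists_cycle.1 ⟨hxb, hbridge⟩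
  refine ⟨_, .deleteEdges_sym2_of_isCycles hc.isCycles_spanningCoe_toSubgraph
    (Subgraph.spanningCoe_le _), ?_⟩
  rw [deleteEdges_adj, Subgraph.spanningCoe_adj, ← Subgraph.mem_edgeSet,
    Walk.mem_edges_toSubgraph]
  exact ⟨hmem, fun h => hx h.1⟩

namespace EssentiallyTwoEdgeConnected

theorem exists_isEvenOutside_adj_of_reachable (hH : EssentiallyTwoEdgeConnected H)
    (hK : ∀ k ∈ K, ∃ k' ∈ K, H.Adj k k') {x a b k : V} (hx : x ∉ K) (hxb : H.Adj x b)
    (hxa : H.Adj x a) (hab : a ≠ b) (hk : k ∈ K)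
    (hbk : (H.deleteEdges {s(x, b)}).Reachable b k) : ∃ D, IsEvenOutside H K D ∧ D.Adj x b := by
  obtain ⟨k', hk', hkk'⟩ := hK k hk
  have hxa_mem : s(x, a) ∈ (H.deleteEdges {s(x, b)}).edgeSet :=
    (deleteEdges_adj ..).2 ⟨hxa, by grind⟩
  have hkk'_mem : s(k, k') ∈ (H.deleteEdges {s(x, b)}).edgeSet :=
    (deleteEdges_adj ..).2 ⟨hkk', by grind⟩
  have hxk := hH.2 _ hxb _ hxa_mem _ hkk'_mem x (Sym2.mem_mk_left ..) k (Sym2.mem_mk_left ..)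
  exact exists_isEvenOutside_adj hx hxb fun h => isBridge_iff.1 h (hxk.trans hbk.symm)

theorem exists_isEvenOutside_mem_support (hH : EssentiallyTwoEdgeConnected H)
    (hK : ∀ k ∈ K, ∃ k' ∈ K, H.Adj k k') (hne : K.Nonempty) {x a c : V} (hx : x ∉ K)
    (hxa : H.Adj x a) (hxc : H.Adj x c) (hac : a ≠ c) :
    ∃ D, IsEvenOutside H K D ∧ x ∈ D.support := by
  obtain ⟨k, hk⟩ := hne
  obtain ⟨p, hp⟩ := (hH.1.preconnected x k).exists_isPath
  cases p with
  | nil => exact (hx hk).elim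
  | @cons _ b _ hxb p =>
    have hbk : (H.deleteEdges {s(x, b)}).Reachable b k := by
      refine ⟨p.toDeleteEdges _ ?_⟩
      rintro _ he rfl
      exact ((Walk.cons_isPath_iff ..).1 hp).2 (p.fst_mem_support_of_mem_edges he)
    obtain ⟨a', hxa', hab⟩ : ∃ a', H.Adj x a' ∧ a' ≠ b := by grind
    obtain ⟨D, hD, hDxb⟩ := hH.exists_isEvenOutside_adj_of_reachable hK hx hxb hxa' hab hk hbk
    exact ⟨D, hD, hDxb.mem_support_left⟩

theorem exists_isEvenOutside_mem_support_of_mem_edgeSet (hH : EssentiallyTwoEdgeConnected H)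
    (hK : ∀ k ∈ K, ∃ k' ∈ K, H.Adj k k') (hne : K.Nonempty) {e : Sym2 V}
    (he : e ∈ (outerGraph H K).edgeSet) :
    ∃ z ∈ e, ∃ D, IsEvenOutside H K D ∧ z ∈ D.support := by
  induction e with
  | _ x y =>
    obtain ⟨hxy, hx, hy⟩ := outerGraph_adj.1 he
    have ⟨k, hk⟩ := hne
    obtain ⟨p⟩ := hH.1.preconnected x k
    obtain ⟨⟨⟨z, w⟩, hzw⟩, -, hz, hw⟩ := p.exists_boundary_dart {x, y} (.inl rfl) (by grind)
    obtain rfl | rfl : z = x ∨ z = y := hz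
    · exact ⟨z, Sym2.mem_mk_left .., hH.exists_isEvenOutside_mem_support hK hne hx hxy hzw
        (by grind)⟩
    · exact ⟨z, Sym2.mem_mk_right .., hH.exists_isEvenOutside_mem_support hK hne hy hxy.symm hzw
        (by grind)⟩

theorem exists_isVertexCover_of_subsingleton (hH : EssentiallyTwoEdgeConnected H)
    (hK : ∀ k ∈ K, ∃ k' ∈ K, H.Adj k k') (hne : K.Nonempty)
    (hmatching : ∀ v, ((outerGraph H K).neighborSet v).Subsingleton) :
    ∃ D, IsEvenOutside H K D ∧ (outerGraph H K).IsVertexCover D.support := by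
  have hmate : ∀ v, ∃ w, ∀ x, (outerGraph H K).Adj v x → w = x := by
    intro v
    by_cases hv : ∃ w, (outerGraph H K).Adj v w
    · obtain ⟨w, hw⟩ := hv
      exact ⟨w, fun x hx => hmatching v hw hx⟩
    · exact ⟨v, fun x hx => (hv ⟨x, hx⟩).elim⟩
  have htouch : ∀ e : Sym2 V, ∃ D, IsEvenOutside H K D ∧
      (e ∈ (outerGraph H K).edgeSet → ∃ z ∈ e, z ∈ D.support) := by
    intro e
    by_cases he : e ∈ (outerGraph H K).edgeSet
    · obtain ⟨z, hze, D, hD, hz⟩ := hH.exists_isEvenOutside_mem_support_of_mem_edgeSet hK hne he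
      exact ⟨D, hD, fun _ => ⟨z, hze, hz⟩⟩
    · exact ⟨⊥, .bot, fun h => (he h).elim⟩
  choose mate hmate using hmate
  choose D hD htouch using htouch
  have hconst : ∀ a b, (outerGraph H K).Adj a b → D s(a, mate a) = D s(b, mate b) := by
    intro a b hab
    rw [hmate a b hab, hmate b a hab.symm, Sym2.eq_swap]
  obtain ⟨E, hE, hEnbr⟩ := IsEvenOutside.exists_glue (fun v _ => hD s(v, mate v)) hconst
  refine ⟨E, hE, fun x y hxy => ?_⟩
  obtain ⟨-, hx, hy⟩ := outerGraph_adj.1 hxy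
  have mem_support {v w : V} (hvw : (outerGraph H K).Adj v w) (hv : v ∉ K)
      (hvD : v ∈ (D s(v, w)).support) : v ∈ E.support := by
    obtain rfl := hmate v w hvw
    obtain ⟨c, hc⟩ := hvD
    exact ⟨c, (Set.ext_iff.1 (hEnbr v hv) c).2 hc⟩
  obtain ⟨z, hz, hzD⟩ := htouch s(x, y) hxy
  obtain rfl | rfl := Sym2.mem_iff.1 hz
  · exact .inl (mem_support hxy hx hzD)
  · exact .inr (mem_support hxy.symm hy (Sym2.eq_swap ▸ hzD))

theorem exists_isVertexCover_of_adj_of_adj [Finite V] (hH : EssentiallyTwoEdgeConnected H)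
    (hK : ∀ k ∈ K, ∃ k' ∈ K, H.Adj k k') (hne : K.Nonempty)
    (hcard : (outerGraph H K).edgeSet.ncard ≤ 3) {v a b : V} (hva : (outerGraph H K).Adj v a)
    (hvb : (outerGraph H K).Adj v b) (hab : a ≠ b) :
    ∃ D, IsEvenOutside H K D ∧ (outerGraph H K).IsVertexCover D.support := by
  obtain ⟨A, hA, hvA⟩ := hH.exists_isEvenOutside_mem_support hK hne (outerGraph_adj.1 hva).2.1
    (outerGraph_adj.1 hva).1 (outerGraph_adj.1 hvb).1 hab
  by_cases hstar : ∃ e ∈ (outerGraph H K).edgeSet, v ∉ e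
  · obtain ⟨e, he, hve⟩ := hstar
    have hedges : (outerGraph H K).edgeSet = {s(v, a), s(v, b), e} :=
      eq_of_ncard_le_three (Set.toFinite _) hcard hva hvb he (by grind) (by grind) (by grind)
    obtain ⟨z, hze, B, hB, hzB⟩ := hH.exists_isEvenOutside_mem_support_of_mem_edgeSet hK hne he
    obtain ⟨D, hD, hvD, hzD⟩ := hA.exists_mem_support_of_mem_support hB hvA hzB
    refine ⟨D, hD, fun x y hxy => ?_⟩
    have hmem : s(x, y) ∈ (outerGraph H K).edgeSet := hxy
    rw [hedges] at hmem
    grind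
  · push Not at hstar
    exact ⟨A, hA, fun x y hxy => by have := hstar s(x, y) hxy; grind⟩

theorem exists_isVertexCover [Finite V] (hH : EssentiallyTwoEdgeConnected H)
    (hK : ∀ k ∈ K, ∃ k' ∈ K, H.Adj k k') (hne : K.Nonempty)
    (hcard : (outerGraph H K).edgeSet.ncard ≤ 3) :
    ∃ D, IsEvenOutside H K D ∧ (outerGraph H K).IsVertexCover D.support := by
  by_cases hmatching : ∀ v, ((outerGraph H K).neighborSet v).Subsingleton
  · exact hH.exists_isVertexCover_of_subsingleton hK hne hmatching
  · simp only [not_forall, Set.not_subsingleton_iff] at hmatching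
    obtain ⟨v, a, hva, b, hvb, hab⟩ := hmatching
    exact hH.exists_isVertexCover_of_adj_of_adj hK hne hcard hva hvb hab

end EssentiallyTwoEdgeConnected

end Bridges

section Anchoring

variable {V : Type*} [Finite V] {H : SimpleGraph V} {K : Set V} {B D : SimpleGraph V}

namespace IsEvenOutside

theorem exists_adj_mem_of_not_reachable (hD : IsEvenOutside H K D) (hH : H.Connected)
    (hne : K.Nonempty) (hcard : (outerGraph H K).edgeSet.ncard ≤ 3) {u : V}
    (hu : u ∈ D.support) (hno : ∀ k ∈ K, ¬ D.Reachable u k) :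
    ∃ a ∈ D.support, D.Reachable u a ∧ ∃ k ∈ K, H.Adj a k := by
  obtain ⟨k₀, hk₀⟩ := hne
  obtain ⟨w⟩ := hH.preconnected u k₀
  obtain ⟨⟨⟨a, k⟩, hak⟩, -, ha, hk⟩ :=
    w.exists_boundary_dart {x | D.Reachable u x} .rfl (hno k₀ hk₀)
  have ha_mem : a ∈ D.support := by
    by_cases hau : a = u
    · rwa [hau]
    · exact mem_support_of_reachable hau ha.symm
  refine ⟨a, ha_mem, ha, k, ?_, hak⟩
  by_contra hkK
  obtain ⟨p, q, hup, huq, hedges⟩ := hD.exists_triangle_of_not_reachable hcard hu hno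
  have hmem : s(a, k) ∈ (outerGraph H K).edgeSet :=
    outerGraph_adj.2 ⟨hak, fun haK => hno a haK ha, hkK⟩
  rw [hedges] at hmem
  apply hk
  obtain rfl | rfl | rfl : k = u ∨ k = p ∨ k = q := by grind
  exacts [.rfl, hup.reachable, huq.reachable]

theorem isAnchored_of_adj (hB : IsEvenOutside H K B)
    (hcard : (outerGraph H K).edgeSet.ncard ≤ 3) {a k p : V} (hk : k ∈ K) (hak : B.Adj a k)
    (hap : (outerGraph H K).Adj a p) : IsAnchored K B := by
  intro v hv
  by_contra! hno
  obtain ⟨p', q', hvp', hvq', hedges⟩ := hB.exists_triangle_of_not_reachable hcard hv hno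
  have hmem : s(a, p) ∈ (outerGraph H K).edgeSet := hap
  rw [hedges] at hmem
  apply hno k hk
  obtain rfl | rfl | rfl : a = v ∨ a = p' ∨ a = q' := by grind
  exacts [hak.reachable, hvp'.reachable.trans hak.reachable, hvq'.reachable.trans hak.reachable]

end IsEvenOutside

namespace EssentiallyTwoEdgeConnected

theorem exists_isAnchored_of_not_reachable (hH : EssentiallyTwoEdgeConnected H)
    (hK : ∀ k ∈ K, ∃ k' ∈ K, H.Adj k k') (hne : K.Nonempty)
    (hcard : (outerGraph H K).edgeSet.ncard ≤ 3) (hD : IsEvenOutside H K D) {u : V}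
    (hu : u ∈ D.support) (hno : ∀ k ∈ K, ¬ D.Reachable u k) :
    ∃ B, IsEvenOutside H K B ∧ (outerGraph H K).IsVertexCover B.support ∧ IsAnchored K B := by
  obtain ⟨a, ha, hua, k, hk, hak⟩ := hD.exists_adj_mem_of_not_reachable hH.1 hne hcard hu hno
  have hno_a : ∀ k ∈ K, ¬ D.Reachable a k := fun k hk h => hno k hk (hua.trans h)
  have haK : a ∉ K := fun h => hno_a a h .rfl
  obtain ⟨p, q, hap, -, hedges⟩ := hD.exists_triangle_of_not_reachable hcard ha hno_a
  have hpK : p ∉ K := fun h => hno_a p h hap.reachable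
  obtain ⟨A, hA, hAak⟩ := hH.exists_isEvenOutside_adj_of_reachable hK haK hak (hD.adj hap)
    (by grind) hk .rfl
  obtain ⟨B, hB, hBak, x, y, hxy, hBxy⟩ :
      ∃ B, IsEvenOutside H K B ∧ B.Adj a k ∧ ∃ x y, (outerGraph H K).Adj x y ∧ B.Adj x y := by
    by_cases h : ∃ x y, (outerGraph H K).Adj x y ∧ A.Adj x y
    · exact ⟨A, hA, hAak, h⟩
    · have hap_outer := hD.adj_outerGraph haK hpK hap
      exact ⟨symmDiff A D, hA.symmDiff hD, .inl ⟨hAak, fun h => hno_a k hk h.reachable⟩, a, p,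
        hap_outer, .inr ⟨hap, fun hA => h ⟨a, p, hap_outer, hA⟩⟩⟩
  refine ⟨B, hB, fun v w hvw => ?_, hB.isAnchored_of_adj hcard hk hBak
    (hD.adj_outerGraph haK hpK hap)⟩
  have hx := hBxy.mem_support_left
  have hy := hBxy.mem_support_right
  rw [← mem_edgeSet, hedges] at hxy hvw
  grind

theorem exists_isVertexCover_isAnchored (hH : EssentiallyTwoEdgeConnected H)
    (hK : ∀ k ∈ K, ∃ k' ∈ K, H.Adj k k') (hne : K.Nonempty)
    (hcard : (outerGraph H K).edgeSet.ncard ≤ 3) :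
    ∃ D, IsEvenOutside H K D ∧ (outerGraph H K).IsVertexCover D.support ∧ IsAnchored K D := by
  obtain ⟨D, hD, hcover⟩ := hH.exists_isVertexCover hK hne hcard
  by_cases hanchored : IsAnchored K D
  · exact ⟨D, hD, hcover, hanchored⟩
  · simp only [IsAnchored, not_forall, not_exists, not_and] at hanchored
    obtain ⟨u, hu, hno⟩ := hanchored
    exact hH.exists_isAnchored_of_not_reachable hK hne hcard hD hu hno

end EssentiallyTwoEdgeConnected

end Anchoring

namespace Collapsible

theorem nontrivial {W : Type*} {Ξ : SimpleGraph W} (hΞ : Collapsible Ξ) : Nontrivial W :=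
  have := Nat.finite_of_card_ne_zero (zero_lt_two.trans_le hΞ.1).ne'
  Finite.one_lt_card_iff_nontrivial.1 hΞ.1

theorem exists_adj {W : Type*} {Ξ : SimpleGraph W} (hΞ : Collapsible Ξ) (v : W) :
    ∃ w, Ξ.Adj v w := by
  have := hΞ.nontrivial
  obtain ⟨F, hF, hconn, -⟩ := hΞ.2 ∅ Set.finite_empty (by simp only [Set.ncard_empty, Even.zero])
  obtain ⟨w, hw⟩ := hconn.preconnected.exists_adj_of_nontrivial v
  exact ⟨w, hF hw⟩

theorem exists_connected_even_sup {V : Type*} [Finite V] {H D : SimpleGraph V} {K : Set V}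
    {Ξ : SimpleGraph K} (hΞ : Collapsible Ξ) (hD : IsEvenOutside H K D) :
    ∃ F ≤ Ξ, F.Connected ∧ ∀ v, Even ((F.spanningCoe ⊔ D).neighborSet v).ncard := by
  let S : Set V := {v | Odd (D.neighborSet v).ncard}
  have hSK : S ⊆ Set.range ((↑) : K → V) := by
    intro v hv
    rw [Subtype.range_coe]
    by_contra hvK
    exact Nat.not_even_iff_odd.2 hv (hD.even v hvK)
  have hS : Even (((↑) : K → V) ⁻¹' S).ncard := by
    rw [Set.ncard_preimage_of_injective_subset_range Subtype.val_injective hSK]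
    exact even_ncard_setOf_odd_ncard_neighborSet D
  obtain ⟨F, hF, hconn, hodd⟩ := hΞ.2 _ (Set.toFinite _) hS
  refine ⟨F, hF, hconn, fun v => ?_⟩
  rw [neighborSet_sup]
  by_cases hv : v ∈ K
  · have hFv : F.spanningCoe.neighborSet v = (↑) '' F.neighborSet ⟨v, hv⟩ :=
      neighborSet_map _ (Function.Embedding.subtype (· ∈ K)) ⟨v, hv⟩
    have hdisj : Disjoint (F.spanningCoe.neighborSet v) (D.neighborSet v) := by
      rw [hFv, Set.disjoint_left]
      rintro _ ⟨w, -, rfl⟩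
      exact hD.not_adj hv w.2
    rw [Set.ncard_union_eq hdisj, hFv, Set.ncard_image_of_injective _ Subtype.val_injective,
      Nat.even_add, ← not_iff_not, Nat.not_even_iff_odd, Nat.not_even_iff_odd]
    exact hodd ⟨v, hv⟩
  · have hFv : F.spanningCoe.neighborSet v = ∅ :=
      Set.eq_empty_of_forall_notMem fun w hw => hv (Subgraph.mem_of_adj_spanningCoe F hw)
    rw [hFv, Set.empty_union]
    exact hD.even v hv

end Collapsible

theorem exists_isDCT_of_even_sup {V : Type*} [Finite V] {H D : SimpleGraph V} {K : Set V}
    {F : SimpleGraph K} (hF : F.spanningCoe ≤ H) (hconn : F.Connected) (hD : D ≤ H)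
    (heven : ∀ v, Even ((F.spanningCoe ⊔ D).neighborSet v).ncard)
    (hcover : (outerGraph H K).IsVertexCover D.support) (hanchored : IsAnchored K D) :
    ∃ (v : V) (w : H.Walk v v), IsDCT H w := by
  obtain ⟨r⟩ := hconn.nonempty
  obtain ⟨v, w, hw, hsupp⟩ := exists_closed_isTrail_of_even_ncard_neighborSet heven r
  have mem_of_mem : ∀ x ∈ K, x ∈ w.support := fun x hx =>
    hsupp x (((hconn.preconnected r ⟨x, hx⟩).map (Embedding.spanningCoe F).toHom).mono le_sup_left)
  have mem_of_mem_support : ∀ x ∈ D.support, x ∈ w.support := by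
    intro x hx
    obtain ⟨k, hk, hxk⟩ := hanchored x hx
    have hrk := (hconn.preconnected r ⟨k, hk⟩).map (Embedding.spanningCoe F).toHom
    exact hsupp x ((hrk.mono le_sup_left).trans (hxk.mono le_sup_right).symm)
  refine ⟨v, w.mapLe (sup_le hF hD), (Walk.isTrail_mapLe _).2 hw, fun e he => ?_⟩
  rw [Walk.support_mapLe_eq_support]
  induction e with
  | _ x y =>
    have : x ∈ w.support ∨ y ∈ w.support := by
      by_cases hxK : x ∈ K
      · exact .inl (mem_of_mem x hxK)
      by_cases hyK : y ∈ K
      · exact .inr (mem_of_mem y hyK)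
      exact (hcover (outerGraph_adj.2 ⟨he, hxK, hyK⟩)).imp (mem_of_mem_support x)
        (mem_of_mem_support y)
    exact this.elim (fun h => ⟨x, h, Sym2.mem_mk_left ..⟩) fun h => ⟨y, h, Sym2.mem_mk_right ..⟩

/-- If `H` is essentially 2-edge-connected, `Ξ` is a collapsible subgraph of `H`,
and deleting the vertices of `Ξ` from `H` leaves at most 3 edges, then `H` has a
dominating closed trail. -/
theorem dct_of_collapsible_subgraph {V : Type*} [Fintype V] (H : SimpleGraph V)
    (hH : EssentiallyTwoEdgeConnected H) (Ξ : H.Subgraph)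
    (hcol : Collapsible Ξ.coe)
    (hfew : ((H.induce Ξ.vertsᶜ).edgeSet).ncard ≤ 3) :
    ∃ (v : V) (w : H.Walk v v), IsDCT H w := by
  have hne : Ξ.verts.Nonempty :=
    have := hcol.nontrivial
    Set.nonempty_coe_sort.1 inferInstance
  have hK : ∀ k ∈ Ξ.verts, ∃ k' ∈ Ξ.verts, H.Adj k k' := by
    intro k hk
    obtain ⟨k', hkk'⟩ := hcol.exists_adj ⟨k, hk⟩
    exact ⟨k', k'.2, Ξ.adj_sub hkk'⟩
  obtain ⟨D, hD, hcover, hanchored⟩ :=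
    hH.exists_isVertexCover_isAnchored hK hne (ncard_edgeSet_outerGraph.trans_le hfew)
  obtain ⟨F, hF, hconn, heven⟩ := hcol.exists_connected_even_sup hD
  have hFH : F.spanningCoe ≤ H :=
    (map_monotone _ hF).trans (Ξ.spanningCoe_coe.trans_le Ξ.spanningCoe_le)
  exact exists_isDCT_of_even_sup hFH hconn (fun _ _ => hD.adj) heven hcover hanchored
end

section
/- The graph K_{3,3}^-, obtained from the complete bipartite graph K_{3,3} by deleting one edge, is collapsible. -/
open SimpleGraph

/-!
A spanning subgraph of a bipartite graph is a biadjacency matrix over `ZMod 2`, and the parities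
of its degrees are the row and column sums. Write `xᵢ = inl i` and `yⱼ = inr j`. By symmetry the
missing edge may be taken to be `x₀y₀`, so `K₃,₃⁻` is the 4-cycle `x₁y₁x₂y₂` together with `x₀`,
joined to `y₁, y₂`, and `y₀`, joined to `x₁, x₂`. If the parity wanted at `x₀` is even, use both of
its edges, which links `y₁` to `y₂`; if it is odd, use only one, chosen to adjust the parities
wanted on the 4-cycle. After treating `y₀` likewise, the parities on the 4-cycle can be realised by
a set of its edges that makes the whole subgraph connected.
-/

open Matrix Sum

section Transport

variable {V W : Type*} {G : SimpleGraph V} {H : SimpleGraph W}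

/-- The isomorphism between edge-deleted graphs induced by a graph isomorphism; it moves the
missing edge around by the symmetries of a graph. -/
def isoDeleteEdges (φ : G ≃g H) (s : Set (Sym2 V)) :
    G.deleteEdges s ≃g H.deleteEdges (Sym2.map φ '' s) where
  toEquiv := φ.toEquiv
  map_rel_iff' {u v} := by
    have h : s(φ u, φ v) ∈ Sym2.map φ '' s ↔ s(u, v) ∈ s := by
      rw [← Sym2.map_mk, (Sym2.map.injective φ.injective).mem_set_image]
    rw [deleteEdges_adj, deleteEdges_adj]
    exact and_congr φ.map_adj_iff h.not

theorem Collapsible.of_iso (φ : G ≃g H) (hG : Collapsible G) : Collapsible H := by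
  refine ⟨Nat.card_congr φ.toEquiv ▸ hG.1, fun S hS hS_even ↦ ?_⟩
  have hφS : (φ ⁻¹' S).ncard = S.ncard :=
    Set.ncard_preimage_of_injective_subset_range φ.injective (by simp [φ.surjective.range_eq])
  obtain ⟨F, hF_le, hF_conn, hF_odd⟩ :=
    hG.2 (φ ⁻¹' S) (hS.preimage φ.injective.injOn) (hφS ▸ hS_even)
  let ψ : F ≃g F.map φ.toEquiv.toEmbedding := Iso.map φ.toEquiv F
  refine ⟨F.map φ.toEquiv.toEmbedding, ?_, ψ.connected_iff.mp hF_conn, fun w ↦ ?_⟩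
  · rw [map_le_iff_le_comap]
    exact fun u v huv ↦ φ.map_adj_iff.mpr (hF_le huv)
  · obtain ⟨v, rfl⟩ := φ.surjective w
    rw [← Set.mem_preimage, ← hF_odd v]
    exact iff_of_eq (congrArg Odd (Nat.card_congr (ψ.mapNeighborSet v)).symm)

end Transport

theorem zmod_two_eq_zero_or_eq_one (t : ZMod 2) : t = 0 ∨ t = 1 := by
  decide +revert

section Parity

variable {α : Type*} [Fintype α]

theorem sum_indicator_one_eq_ncard {R : Type*} [NonAssocSemiring R] (S : Set α) :
    ∑ x, S.indicator 1 x = (S.ncard : R) := by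
  classical
  simp [Set.indicator_apply, Set.ncard_eq_toFinset_card']

theorem odd_ncard_eq_one_iff_sum_eq_one (f : α → ZMod 2) :
    Odd {x | f x = 1}.ncard ↔ ∑ x, f x = 1 := by
  have hf : {x | f x = 1}.indicator 1 = f := by
    ext x
    obtain h | h := zmod_two_eq_zero_or_eq_one (f x) <;> simp [h]
  rw [← ZMod.natCast_eq_one_iff_odd, ← sum_indicator_one_eq_ncard, hf]

end Parity

section BiadjGraph

variable {α β : Type*} {A : Matrix α β (ZMod 2)}

/-- The bipartite graph with biadjacency matrix `A`. Taking the entries in `ZMod 2` makes the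
parities of the degrees equal to the row and column sums. -/
def biadjGraph (A : Matrix α β (ZMod 2)) : SimpleGraph (α ⊕ β) where
  Adj
    | inl x, inr y => A x y = 1
    | inr y, inl x => A x y = 1
    | _, _ => False
  symm := ⟨by rintro (_ | _) (_ | _) h <;> exact h⟩
  loopless := ⟨by rintro (_ | _) h <;> exact h⟩

theorem biadjGraph_le_iff {G : SimpleGraph (α ⊕ β)} :
    biadjGraph A ≤ G ↔ ∀ x y, A x y = 1 → G.Adj (inl x) (inr y) := by
  refine ⟨fun h x y hxy ↦ h hxy, fun h ↦ ?_⟩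
  rintro (x | y) (x' | y') hadj
  exacts [hadj.elim, h x y' hadj, (h x' y hadj).symm, hadj.elim]

theorem biadjGraph_le_completeBipartiteGraph_deleteEdges {x₀ : α} {y₀ : β} (h : A x₀ y₀ = 0) :
    biadjGraph A ≤ (completeBipartiteGraph α β).deleteEdges {s(inl x₀, inr y₀)} := by
  refine biadjGraph_le_iff.mpr fun x y hxy ↦ ?_
  have hne : ¬(x = x₀ ∧ y = y₀) := by
    rintro ⟨rfl, rfl⟩
    exact zero_ne_one (h.symm.trans hxy)
  simpa using hne

theorem reachable_biadjGraph {x : α} {y : β} (h : A x y = 1) :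
    (biadjGraph A).Reachable (inl x) (inr y) :=
  Adj.reachable (G := biadjGraph A) h

theorem neighborSet_biadjGraph_inl (x : α) :
    (biadjGraph A).neighborSet (inl x) = inr '' {y | A x y = 1} := by
  ext (_ | _) <;> simp [biadjGraph]

theorem neighborSet_biadjGraph_inr (y : β) :
    (biadjGraph A).neighborSet (inr y) = inl '' {x | A x y = 1} := by
  ext (_ | _) <;> simp [biadjGraph]

theorem odd_ncard_neighborSet_biadjGraph_inl [Fintype β] (x : α) :
    Odd ((biadjGraph A).neighborSet (inl x)).ncard ↔ ∑ y, A x y = 1 := by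
  rw [neighborSet_biadjGraph_inl, Set.ncard_image_of_injective _ inr_injective,
    odd_ncard_eq_one_iff_sum_eq_one]

theorem odd_ncard_neighborSet_biadjGraph_inr [Fintype α] (y : β) :
    Odd ((biadjGraph A).neighborSet (inr y)).ncard ↔ ∑ x, A x y = 1 := by
  rw [neighborSet_biadjGraph_inr, Set.ncard_image_of_injective _ inl_injective,
    odd_ncard_eq_one_iff_sum_eq_one]

/-- The isomorphism exchanging the two sides of a bipartite graph, which lets rows and columns of
a biadjacency matrix play symmetric roles. -/
def biadjGraphTransposeIso (A : Matrix α β (ZMod 2)) : biadjGraph A ≃g biadjGraph Aᵀ where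
  toEquiv := Equiv.sumComm α β
  map_rel_iff' {u v} := by rcases u with _ | _ <;> rcases v with _ | _ <;> rfl

variable [Fintype α] [Fintype β] {a : α → ZMod 2} {b : β → ZMod 2}

/-- `A` is the biadjacency matrix of a connected graph whose degrees have parities `a` on the left
and `b` on the right: the certificate of collapsibility for one set of odd vertices. -/
structure IsConnectedWithParities (A : Matrix α β (ZMod 2)) (a : α → ZMod 2) (b : β → ZMod 2) :
    Prop where
  connected : (biadjGraph A).Connected
  row_sum : ∀ x, ∑ y, A x y = a x
  col_sum : ∀ y, ∑ x, A x y = b y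

theorem IsConnectedWithParities.transpose (h : IsConnectedWithParities A a b) :
    IsConnectedWithParities Aᵀ b a where
  connected := (biadjGraphTransposeIso A).connected_iff.mp h.connected
  row_sum := h.col_sum
  col_sum := h.row_sum

theorem collapsible_of_forall_isConnectedWithParities {G : SimpleGraph (α ⊕ β)}
    (hcard : 2 ≤ Nat.card (α ⊕ β))
    (hG : ∀ (a : α → ZMod 2) (b : β → ZMod 2), ∑ x, a x = ∑ y, b y →
      ∃ A, biadjGraph A ≤ G ∧ IsConnectedWithParities A a b) :
    Collapsible G := by
  refine ⟨hcard, fun S _ hS ↦ ?_⟩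
  let χ : α ⊕ β → ZMod 2 := S.indicator 1
  have hχ (v : α ⊕ β) : χ v = 1 ↔ v ∈ S := Set.indicator_eq_one_iff_mem (ZMod 2)
  have hχ_sum : ∑ x, χ (inl x) = ∑ y, χ (inr y) := by
    rw [← CharTwo.add_eq_zero, ← Fintype.sum_sum_type, sum_indicator_one_eq_ncard]
    exact hS.natCast_zmod_two
  obtain ⟨A, hA_le, hA⟩ := hG (χ ∘ inl) (χ ∘ inr) hχ_sum
  refine ⟨biadjGraph A, hA_le, hA.connected, ?_⟩
  rintro (x | y)
  · rw [odd_ncard_neighborSet_biadjGraph_inl, hA.row_sum, Function.comp_apply, hχ]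
  · rw [odd_ncard_neighborSet_biadjGraph_inr, hA.col_sum, Function.comp_apply, hχ]

end BiadjGraph

section ThreeByThree

variable {a b : Fin 3 → ZMod 2}

theorem exists_isConnectedWithParities_of_eq_zero_of_eq_zero (hab : ∑ x, a x = ∑ y, b y)
    (ha : a 0 = 0) (hb : b 0 = 0) :
    ∃ A, A 0 0 = 0 ∧ IsConnectedWithParities A a b := by
  simp only [Fin.sum_univ_three] at hab
  -- The edge x₁y₁ joins the paths y₁x₀y₂ and x₁y₀x₂.
  let A : Matrix (Fin 3) (Fin 3) (ZMod 2) :=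
    !![0, 1, 1; 1, 1, a 1; 1, b 1, a 2 + b 1 + 1]
  have hx0y1 : (biadjGraph A).Reachable (inl 0) (inr 1) := reachable_biadjGraph rfl
  have hx0y2 : (biadjGraph A).Reachable (inl 0) (inr 2) := reachable_biadjGraph rfl
  have hx1y0 : (biadjGraph A).Reachable (inl 1) (inr 0) := reachable_biadjGraph rfl
  have hx1y1 : (biadjGraph A).Reachable (inl 1) (inr 1) := reachable_biadjGraph rfl
  have hx2y0 : (biadjGraph A).Reachable (inl 2) (inr 0) := reachable_biadjGraph rfl
  refine ⟨A, rfl, (connected_iff_exists_forall_reachable _).mpr ⟨inl 1, ?_⟩, ?_, ?_⟩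
  · have hx1x0 : (biadjGraph A).Reachable (inl 1) (inl 0) := hx1y1.trans hx0y1.symm
    rintro (k | k) <;> fin_cases k
    exacts [hx1x0, .rfl, hx1y0.trans hx2y0.symm, hx1y0, hx1y1, hx1x0.trans hx0y2]
  all_goals
    intro k
    rw [Fin.sum_univ_three]
    fin_cases k <;>
      simp only [A, Fin.reduceFinMk, Fin.zero_eta, Fin.mk_one, of_apply, cons_val] <;> grind

theorem exists_isConnectedWithParities_of_eq_one_of_eq_zero (hab : ∑ x, a x = ∑ y, b y)
    (ha : a 0 = 1) (hb : b 0 = 0) :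
    ∃ A, A 0 0 = 0 ∧ IsConnectedWithParities A a b := by
  simp only [Fin.sum_univ_three] at hab
  -- The edge at x₀ is chosen so that y₁ has an odd number of neighbours among x₁, x₂, and y₂ is
  -- joined to x₁; hence y₁ and y₂ are both attached to the path x₁y₀x₂.
  let A : Matrix (Fin 3) (Fin 3) (ZMod 2) :=
    !![0, b 1 + 1, b 1; 1, a 1, 1; 1, a 1 + 1, b 1 + b 2 + 1]
  have hx1y0 : (biadjGraph A).Reachable (inl 1) (inr 0) := reachable_biadjGraph rfl
  have hx1y2 : (biadjGraph A).Reachable (inl 1) (inr 2) := reachable_biadjGraph rfl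
  have hx2y0 : (biadjGraph A).Reachable (inl 2) (inr 0) := reachable_biadjGraph rfl
  have hx1x2 : (biadjGraph A).Reachable (inl 1) (inl 2) := hx1y0.trans hx2y0.symm
  have hx1y1 : (biadjGraph A).Reachable (inl 1) (inr 1) := by
    obtain h | h := zmod_two_eq_zero_or_eq_one (a 1)
    · exact hx1x2.trans (reachable_biadjGraph (by simp [A, h]))
    · exact reachable_biadjGraph (by simp [A, h])
  have hx1x0 : (biadjGraph A).Reachable (inl 1) (inl 0) := by
    obtain h | h := zmod_two_eq_zero_or_eq_one (b 1)
    · exact hx1y1.trans (reachable_biadjGraph (by simp [A, h])).symm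
    · exact hx1y2.trans (reachable_biadjGraph (by simp [A, h])).symm
  refine ⟨A, rfl, (connected_iff_exists_forall_reachable _).mpr ⟨inl 1, ?_⟩, ?_, ?_⟩
  · rintro (k | k) <;> fin_cases k
    exacts [hx1x0, .rfl, hx1x2, hx1y0, hx1y1, hx1y2]
  all_goals
    intro k
    rw [Fin.sum_univ_three]
    fin_cases k <;>
      simp only [A, Fin.reduceFinMk, Fin.zero_eta, Fin.mk_one, of_apply, cons_val] <;> grind

theorem exists_isConnectedWithParities_of_eq_one_of_eq_one (hab : ∑ x, a x = ∑ y, b y)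
    (ha : a 0 = 1) (hb : b 0 = 1) :
    ∃ A, A 0 0 = 0 ∧ IsConnectedWithParities A a b := by
  simp only [Fin.sum_univ_three] at hab
  -- The edges at x₀ and y₀ are chosen so that the path x₁y₂x₂y₁ completes the parities, up to the
  -- edge x₁y₁.
  let A : Matrix (Fin 3) (Fin 3) (ZMod 2) :=
    !![0, b 2 + 1, b 2; a 2 + 1, a 1 + a 2, 1; a 2, 1, 1]
  have hx1y2 : (biadjGraph A).Reachable (inl 1) (inr 2) := reachable_biadjGraph rfl
  have hx2y1 : (biadjGraph A).Reachable (inl 2) (inr 1) := reachable_biadjGraph rfl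
  have hx2y2 : (biadjGraph A).Reachable (inl 2) (inr 2) := reachable_biadjGraph rfl
  have hx2x1 : (biadjGraph A).Reachable (inl 2) (inl 1) := hx2y2.trans hx1y2.symm
  have hx2x0 : (biadjGraph A).Reachable (inl 2) (inl 0) := by
    obtain h | h := zmod_two_eq_zero_or_eq_one (b 2)
    · exact hx2y1.trans (reachable_biadjGraph (by simp [A, h])).symm
    · exact hx2y2.trans (reachable_biadjGraph (by simp [A, h])).symm
  have hx2y0 : (biadjGraph A).Reachable (inl 2) (inr 0) := by
    obtain h | h := zmod_two_eq_zero_or_eq_one (a 2)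
    · exact hx2x1.trans (reachable_biadjGraph (by simp [A, h]))
    · exact reachable_biadjGraph (by simp [A, h])
  refine ⟨A, rfl, (connected_iff_exists_forall_reachable _).mpr ⟨inl 2, ?_⟩, ?_, ?_⟩
  · rintro (k | k) <;> fin_cases k
    exacts [hx2x0, hx2x1, .rfl, hx2y0, hx2y1, hx2y2]
  all_goals
    intro k
    rw [Fin.sum_univ_three]
    fin_cases k <;>
      simp only [A, Fin.reduceFinMk, Fin.zero_eta, Fin.mk_one, of_apply, cons_val] <;> grind

theorem exists_isConnectedWithParities (hab : ∑ x, a x = ∑ y, b y) :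
    ∃ A, A 0 0 = 0 ∧ IsConnectedWithParities A a b := by
  obtain ha | ha := zmod_two_eq_zero_or_eq_one (a 0) <;>
    obtain hb | hb := zmod_two_eq_zero_or_eq_one (b 0)
  · exact exists_isConnectedWithParities_of_eq_zero_of_eq_zero hab ha hb
  · obtain ⟨A, hA₀, hA⟩ := exists_isConnectedWithParities_of_eq_one_of_eq_zero hab.symm hb ha
    exact ⟨Aᵀ, hA₀, hA.transpose⟩
  · exact exists_isConnectedWithParities_of_eq_one_of_eq_zero hab ha hb
  · exact exists_isConnectedWithParities_of_eq_one_of_eq_one hab ha hb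

theorem collapsible_completeBipartiteGraph_deleteEdges_zero_zero :
    Collapsible ((completeBipartiteGraph (Fin 3) (Fin 3)).deleteEdges {s(inl 0, inr 0)}) := by
  refine collapsible_of_forall_isConnectedWithParities (by simp) fun a b hab ↦ ?_
  obtain ⟨A, hA₀, hA⟩ := exists_isConnectedWithParities hab
  exact ⟨A, biadjGraph_le_completeBipartiteGraph_deleteEdges hA₀, hA⟩

end ThreeByThree

/-- `K_{3,3}` minus any one edge is collapsible. -/
theorem k33_minus_edge_collapsible :
    ∀ e ∈ (completeBipartiteGraph (Fin 3) (Fin 3)).edgeSet,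
      Collapsible ((completeBipartiteGraph (Fin 3) (Fin 3)).deleteEdges {e}) := by
  rw [edgeSet_completeBipartiteGraph]
  rintro _ ⟨⟨i, j⟩, rfl⟩
  let φ := completeBipartiteGraphCongr (Equiv.swap 0 i) (Equiv.swap 0 j)
  have hφ : Sym2.map φ '' {s(inl 0, inr 0)} = {s(inl i, inr j)} := by
    simp [φ]
  rw [← hφ]
  exact collapsible_completeBipartiteGraph_deleteEdges_zero_zero.of_iso (isoDeleteEdges φ _)
end

section
/- Let H be an essentially 2-edge-connected triangle-free simple graph with n = |E(H)| that does not contain a dominating closed trail. If {e1, e2, e3} is a matching of H (three pairwise nonadjacent edges), then ed(e1) + ed(e2) + ed(e3) ≤ n + 1. -/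
open SimpleGraph

/-- The edge-degree of `e` in `H`: the number of edges of `H` other than `e`
sharing an endpoint with `e`. -/
noncomputable def edgeDeg {V : Type*} (H : SimpleGraph V) (e : Sym2 V) : ℕ :=
  {f | f ∈ H.edgeSet ∧ f ≠ e ∧ ∃ v, v ∈ f ∧ v ∈ e}.ncard

/-- Two edges are nonadjacent if they share no endpoint. -/
def EdgesNonadj {V : Type*} (e f : Sym2 V) : Prop :=
  ∀ v, v ∈ e → v ∉ f

/-!
Let `R` be the set of edges missing all six endpoints of the matching. Since `ed(eᵢ) + 1` counts the
edges meeting `eᵢ`, inclusion-exclusion bounds `∑ ed(eᵢ) + 3 + |R|` by `n` plus the number of edges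
joining two of the `eᵢ`, counted over the three pairs. In a triangle-free graph at most two edges
join a given pair, and if there are two they form a perfect matching between the endpoints. If the
bound fails, then at least `5 + |R|` edges join pairs, so `|R| ≤ 1` and some `eᵢ` is doubly joined
to both others, which gives a hexagon through all six endpoints. It is dominating if `R` is empty.
Otherwise all pairs are doubly joined, and the six endpoints carry a `K₃,₃`. Essential
2-edge-connectivity provides two edges leaving the remaining edge `xy`, with distinct ends by
triangle-freeness, and the trail of length two or three formed by them, using `xy` if necessary, is
closed up by a spanning trail of the `K₃,₃`.
-/

section Cardinality

variable {α : Type*}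

lemma ncard_pair_le (a b : α) : ({a, b} : Set α).ncard ≤ 2 := by
  simpa using Set.ncard_insert_le a {b}

lemma ncard_add_ncard_add_ncard_le {A B C : Set α} (hA : A.Finite) (hB : B.Finite)
    (hC : C.Finite) :
    A.ncard + B.ncard + C.ncard ≤
      (A ∪ B ∪ C).ncard + (A ∩ B).ncard + (A ∩ C).ncard + (B ∩ C).ncard := by
  have hAB := Set.ncard_union_add_ncard_inter A B hA hB
  have hABC := Set.ncard_union_add_ncard_inter (A ∪ B) C (hA.union hB) hC
  have hinter := Set.ncard_union_le (A ∩ C) (B ∩ C)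
  rw [← Set.union_inter_distrib_right] at hinter
  omega

end Cardinality

section Graph

variable {V : Type*} {H : SimpleGraph V}

/-- The set of edges of `H` with at least one endpoint in `S`. The endpoint set of an edge `e` is
its coercion to `Set V`, so `edgesMeeting H e` is the closed neighbourhood of `e` in the line
graph. -/
def edgesMeeting (H : SimpleGraph V) (S : Set V) : Set (Sym2 V) :=
  {f ∈ H.edgeSet | ∃ v ∈ f, v ∈ S}

lemma edgesMeeting_subset_edgeSet (S : Set V) : edgesMeeting H S ⊆ H.edgeSet :=
  Set.sep_subset _ _

lemma edgesMeeting_mono {S T : Set V} (h : S ⊆ T) : edgesMeeting H S ⊆ edgesMeeting H T :=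
  fun _ ⟨hf, v, hvf, hvS⟩ ↦ ⟨hf, v, hvf, h hvS⟩

lemma edgesMeeting_union (S T : Set V) :
    edgesMeeting H (S ∪ T) = edgesMeeting H S ∪ edgesMeeting H T := by
  ext f
  simp only [edgesMeeting, Set.mem_union, Set.mem_ofPred_eq]
  grind

lemma isDCT_iff {v : V} {w : H.Walk v v} :
    IsDCT H w ↔ w.IsTrail ∧ H.edgeSet ⊆ edgesMeeting H {u | u ∈ w.support} := by
  refine and_congr_right fun _ ↦ ⟨fun h f hf ↦ ?_, fun h f hf ↦ ?_⟩
  · obtain ⟨u, huw, huf⟩ := h f hf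
    exact ⟨hf, u, huf, huw⟩
  · obtain ⟨-, u, huf, huw⟩ := h hf
    exact ⟨u, huw, huf⟩

lemma ncard_edgesMeeting_coe [Finite V] {e : Sym2 V} (he : e ∈ H.edgeSet) :
    (edgesMeeting H e).ncard = edgeDeg H e + 1 := by
  have hmem : e ∈ edgesMeeting H e := by
    induction e with | _ a b
    exact ⟨he, a, Sym2.mem_mk_left a b, Sym2.mem_mk_left a b⟩
  have hdiff : {f | f ∈ H.edgeSet ∧ f ≠ e ∧ ∃ v, v ∈ f ∧ v ∈ e} = edgesMeeting H e \ {e} := by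
    ext f
    simp only [edgesMeeting, Set.mem_sdiff, Set.mem_ofPred_eq, Set.mem_singleton_iff,
      SetLike.mem_coe]
    tauto
  rw [edgeDeg, hdiff, Set.ncard_sdiff_singleton_add_one hmem]

lemma sum_edgeDeg_add_ncard_le [Finite V] {e₁ e₂ e₃ : Sym2 V} (he₁ : e₁ ∈ H.edgeSet)
    (he₂ : e₂ ∈ H.edgeSet) (he₃ : e₃ ∈ H.edgeSet) :
    edgeDeg H e₁ + edgeDeg H e₂ + edgeDeg H e₃ + 3 +
        (H.edgeSet \ edgesMeeting H (e₁ ∪ e₂ ∪ e₃)).ncard ≤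
      H.edgeSet.ncard + (edgesMeeting H e₁ ∩ edgesMeeting H e₂).ncard +
        (edgesMeeting H e₁ ∩ edgesMeeting H e₃).ncard +
        (edgesMeeting H e₂ ∩ edgesMeeting H e₃).ncard := by
  have hcount := ncard_add_ncard_add_ncard_le (Set.toFinite (edgesMeeting H e₁))
    (Set.toFinite (edgesMeeting H e₂)) (Set.toFinite (edgesMeeting H e₃))
  rw [← edgesMeeting_union, ← edgesMeeting_union, ncard_edgesMeeting_coe he₁,
    ncard_edgesMeeting_coe he₂, ncard_edgesMeeting_coe he₃] at hcount
  have hsplit := Set.ncard_sdiff_add_ncard_of_subset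
    (edgesMeeting_subset_edgeSet (H := H) (e₁ ∪ e₂ ∪ e₃))
  omega

lemma not_adj_of_adj_of_adj (htf : H.CliqueFree 3) {a b c : V} (hab : H.Adj a b)
    (hac : H.Adj a c) : ¬ H.Adj b c := by
  classical
  exact fun hbc ↦ htf {a, b, c} (is3Clique_triple_iff.2 ⟨hab, hac, hbc⟩)

lemma edgesMeeting_inter_edgesMeeting_subset {a b c d : V}
    (hn : EdgesNonadj s(a, b) s(c, d)) :
    edgesMeeting H s(a, b) ∩ edgesMeeting H s(c, d) ⊆
      {f ∈ H.edgeSet | f = s(a, c) ∨ f = s(a, d) ∨ f = s(b, c) ∨ f = s(b, d)} := by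
  rintro f ⟨⟨hf, v, hvf, hv⟩, -, w, hwf, hw⟩
  have hvw : v ≠ w := by
    rintro rfl
    exact hn v hv hw
  obtain rfl := (Sym2.mem_and_mem_iff hvw).1 ⟨hvf, hwf⟩
  rcases Sym2.mem_iff.1 hv with rfl | rfl <;> rcases Sym2.mem_iff.1 hw with rfl | rfl <;>
    exact ⟨hf, by simp⟩

lemma exists_edgesMeeting_inter_subset_pair (htf : H.CliqueFree 3) {a b : V} {e : Sym2 V}
    (hab : H.Adj a b) (he : e ∈ H.edgeSet) (hn : EdgesNonadj s(a, b) e) :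
    ∃ c d, e = s(c, d) ∧
      edgesMeeting H s(a, b) ∩ edgesMeeting H e ⊆ {s(a, c), s(b, d)} := by
  induction e with | _ c d
  have hsub := edgesMeeting_inter_edgesMeeting_subset (H := H) hn
  have ha : H.Adj a c → ¬ H.Adj a d := fun hac had ↦ not_adj_of_adj_of_adj htf hac had he
  have hb : H.Adj b c → ¬ H.Adj b d := fun hbc hbd ↦ not_adj_of_adj_of_adj htf hbc hbd he
  have hc : H.Adj a c → ¬ H.Adj b c := not_adj_of_adj_of_adj htf hab
  have hd : H.Adj a d → ¬ H.Adj b d := not_adj_of_adj_of_adj htf hab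
  by_cases hparallel : H.Adj a c ∨ H.Adj b d
  · refine ⟨c, d, rfl, fun f hf ↦ ?_⟩
    obtain ⟨hfH, rfl | rfl | rfl | rfl⟩ := hsub hf <;> simp_all
  · refine ⟨d, c, Sym2.eq_swap, fun f hf ↦ ?_⟩
    obtain ⟨hfH, rfl | rfl | rfl | rfl⟩ := hsub hf <;> simp_all

lemma ncard_edgesMeeting_inter_le_two (htf : H.CliqueFree 3) {e f : Sym2 V} (he : e ∈ H.edgeSet)
    (hf : f ∈ H.edgeSet) (hn : EdgesNonadj e f) :
    (edgesMeeting H e ∩ edgesMeeting H f).ncard ≤ 2 := by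
  induction e with | _ a b
  obtain ⟨c, d, -, hsub⟩ := exists_edgesMeeting_inter_subset_pair htf he hf hn
  exact (Set.ncard_le_ncard hsub).trans (ncard_pair_le _ _)

lemma exists_adj_adj_of_two_le_ncard (htf : H.CliqueFree 3) {a b : V} {e : Sym2 V}
    (hab : H.Adj a b) (he : e ∈ H.edgeSet) (hn : EdgesNonadj s(a, b) e)
    (htwo : 2 ≤ (edgesMeeting H s(a, b) ∩ edgesMeeting H e).ncard) :
    ∃ c d, e = s(c, d) ∧ H.Adj a c ∧ H.Adj b d := by
  obtain ⟨c, d, rfl, hsub⟩ := exists_edgesMeeting_inter_subset_pair htf hab he hn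
  have heq := Set.eq_of_subset_of_ncard_le hsub ((ncard_pair_le _ _).trans htwo)
  have hedges : ({s(a, c), s(b, d)} : Set (Sym2 V)) ⊆ H.edgeSet :=
    heq ▸ Set.inter_subset_left.trans (edgesMeeting_subset_edgeSet _)
  exact ⟨c, d, rfl, hedges (Set.mem_insert _ _), hedges (Set.mem_insert_of_mem _ rfl)⟩

lemma EssentiallyTwoEdgeConnected.exists_two_boundary_edges (hH : EssentiallyTwoEdgeConnected H)
    {X : Set V} {x y p q : V} (hxy : H.Adj x y) (hpq : H.Adj p q) (hx : x ∈ X) (hy : y ∈ X)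
    (hp : p ∉ X) (hq : q ∉ X) :
    ∃ t s t' s', (t ∈ X ∧ s ∉ X ∧ H.Adj t s) ∧ (t' ∈ X ∧ s' ∉ X ∧ H.Adj t' s') ∧
      s(t', s') ≠ s(t, s) := by
  have boundary {G : SimpleGraph V} (hG : G.Reachable x p) :
      ∃ t s, t ∈ X ∧ s ∉ X ∧ G.Adj t s := by
    obtain ⟨w⟩ := hG
    obtain ⟨δ, -, hfst, hsnd⟩ := w.exists_boundary_dart X hx hp
    exact ⟨δ.fst, δ.snd, hfst, hsnd, δ.adj⟩
  obtain ⟨t, s, ht, hs, hts⟩ := boundary (hH.1 x p)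
  have hxy' : s(x, y) ∈ (H.deleteEdges {s(t, s)}).edgeSet := by
    rw [mem_edgeSet, deleteEdges_adj, Set.mem_singleton_iff, Sym2.eq_iff]
    grind
  have hpq' : s(p, q) ∈ (H.deleteEdges {s(t, s)}).edgeSet := by
    rw [mem_edgeSet, deleteEdges_adj, Set.mem_singleton_iff, Sym2.eq_iff]
    grind
  obtain ⟨t', s', ht', hs', hts'⟩ := boundary <| hH.2 s(t, s) hts _ hxy' _ hpq'
    x (Sym2.mem_mk_left x y) p (Sym2.mem_mk_left p q)
  rw [deleteEdges_adj, Set.mem_singleton_iff] at hts'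
  exact ⟨t, s, t', s', ⟨ht, hs, hts⟩, ⟨ht', hs', hts'.1⟩, hts'.2⟩

/-- Any two distinct vertices of `S` are joined by a trail of `H` whose vertex set is exactly
`S`. -/
def SpanningTrailConnected (H : SimpleGraph V) (S : Set V) : Prop :=
  ∀ s ∈ S, ∀ t ∈ S, s ≠ t → ∃ T : H.Walk s t, T.IsTrail ∧ {z | z ∈ T.support} = S

lemma exists_trail_of_boundary_edges (htf : H.CliqueFree 3) {x y s s' t t' : V} (hxy : H.Adj x y)
    (ht : t ∈ s(x, y)) (ht' : t' ∈ s(x, y)) (hs : s ∉ s(x, y)) (hs' : s' ∉ s(x, y))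
    (hts : H.Adj t s) (hts' : H.Adj t' s') (hne : s(t', s') ≠ s(t, s)) :
    s' ≠ s ∧ ∃ W : H.Walk s s', W.IsTrail ∧ t ∈ W.support ∧
      ∀ f ∈ W.edges, ∃ z ∈ f, z ∈ s(x, y) := by
  by_cases htt : t = t'
  · subst htt
    have hss : s' ≠ s := by
      rintro rfl
      exact hne rfl
    refine ⟨hss, .cons hts.symm (.cons hts' .nil), ?_, by simp, by simp_all⟩
    simp [hss.symm, hts.ne']
  · have htt' : H.Adj t t' := by
      rw [← mem_edgeSet, ← (Sym2.mem_and_mem_iff htt).1 ⟨ht, ht'⟩]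
      exact hxy
    have hss : s' ≠ s := by
      rintro rfl
      exact not_adj_of_adj_of_adj htf htt' hts hts'
    refine ⟨hss, .cons hts.symm (.cons htt' (.cons hts' .nil)), ?_, by simp, by simp_all⟩
    simp only [Walk.isTrail_def, Walk.edges_cons, Walk.edges_nil, List.nodup_cons, List.mem_cons,
      Sym2.eq_iff]
    grind

lemma SpanningTrailConnected.exists_isDCT {S : Set V} (hS : SpanningTrailConnected H S)
    (hH : EssentiallyTwoEdgeConnected H) (htf : H.CliqueFree 3) {x y p q : V}
    (hpq : H.Adj p q) (hp : p ∈ S) (hq : q ∈ S)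
    (hdiff : H.edgeSet \ edgesMeeting H S = {s(x, y)}) :
    ∃ (v : V) (w : H.Walk v v), IsDCT H w := by
  obtain ⟨hxy, hxyS⟩ : s(x, y) ∈ H.edgeSet \ edgesMeeting H S := hdiff ▸ rfl
  have hdisj : ∀ z ∈ s(x, y), z ∉ S := fun z hz hzS ↦ hxyS ⟨hxy, z, hz, hzS⟩
  have hout : ∀ {t s : V}, t ∈ s(x, y) → s ∉ s(x, y) → H.Adj t s → s ∈ S := by
    intro t s ht hs hts
    by_contra hsS
    have hmiss : s(t, s) ∈ H.edgeSet \ edgesMeeting H S := by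
      refine ⟨hts, fun ⟨_, z, hz, hzS⟩ ↦ ?_⟩
      rcases Sym2.mem_iff.1 hz with rfl | rfl
      exacts [hdisj _ ht hzS, hsS hzS]
    rw [hdiff, Set.mem_singleton_iff] at hmiss
    exact hs (hmiss ▸ Sym2.mem_mk_right t s)
  obtain ⟨t, s, t', s', ⟨ht, hs, hts⟩, ⟨ht', hs', hts'⟩, hne⟩ :=
    hH.exists_two_boundary_edges (X := s(x, y)) hxy hpq (Sym2.mem_mk_left x y)
      (Sym2.mem_mk_right x y) (fun h ↦ hdisj p h hp) (fun h ↦ hdisj q h hq)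
  obtain ⟨hss, W, hW, htW, hWedges⟩ :=
    exists_trail_of_boundary_edges htf hxy ht ht' hs hs' hts hts' hne
  obtain ⟨T, hT, hTS⟩ := hS s' (hout ht' hs' hts') s (hout ht hs hts) hss
  have hTsupp : ∀ z, z ∈ T.support ↔ z ∈ S := Set.ext_iff.1 hTS
  refine ⟨s, W.append T, isDCT_iff.2 ⟨(Walk.isTrail_append _ _).2 ⟨hW, hT, ?_⟩, fun f hf ↦ ?_⟩⟩
  · intro f hfW hfT
    obtain ⟨z, hzf, hz⟩ := hWedges f hfW
    exact hdisj z hz ((hTsupp z).1 (T.mem_support_of_mem_edges hfT hzf))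
  · by_cases hfS : f ∈ edgesMeeting H S
    · refine edgesMeeting_mono (fun z hz ↦ ?_) hfS
      exact (Walk.mem_support_append_iff _ _).2 (.inr ((hTsupp z).2 hz))
    · obtain rfl : f = s(x, y) := Set.mem_singleton_iff.1 (hdiff ▸ (⟨hf, hfS⟩ : f ∈ H.edgeSet \ _))
      exact ⟨hf, t, ht, (Walk.mem_support_append_iff _ _).2 (.inl htW)⟩

/-- The homomorphism from the circulant graph with jumps `J` given by a labelling of vertices of
`H` for which every jump is an edge of `H`. -/
def circulantHom {G : Type*} [AddGroup G] (J : Set G) (v : G → V)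
    (hv : ∀ j ∈ J, ∀ i, H.Adj (v i) (v (j + i))) : circulantGraph J →g H where
  toFun := v
  map_rel' := by
    rintro a b ⟨-, h | h⟩
    · simpa using (hv _ h b).symm
    · simpa using hv _ h a

lemma mem_support_cycleGraph_cycle {n : ℕ} (i : Fin (n + 3)) :
    i ∈ (cycleGraph.cycle n).support := by
  have hi : (cycleGraph.cycle n).getVert (n + 3 - i) = i := by
    rw [cycleGraph.getVert_cycle (Nat.sub_le _ _), Fin.ext_iff]
    simp [Nat.sub_sub_self i.2.le, Nat.mod_eq_of_lt i.2]
  exact hi ▸ Walk.getVert_mem_support _ _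

lemma exists_isDCT_of_cycle {n : ℕ} {v : Fin (n + 3) → V} (hv : Function.Injective v)
    (hside : ∀ i, H.Adj (v i) (v (i + 1)))
    (hdom : H.edgeSet ⊆ edgesMeeting H (Set.range v)) :
    ∃ (u : V) (w : H.Walk u u), IsDCT H w := by
  let f : cycleGraph (n + 3) →g H :=
    (circulantHom {1} v (by simpa [add_comm] using hside)).comp
      (Hom.ofLE (cycleGraph_eq_circulantGraph (n + 2)).le)
  refine ⟨_, (cycleGraph.cycle n).map f, isDCT_iff.2 ⟨?_, hdom.trans (edgesMeeting_mono ?_)⟩⟩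
  · exact (Walk.isTrail_map_iff_of_injective hv).2 cycleGraph.isCycle_cycle.isTrail
  · rintro _ ⟨i, rfl⟩
    rw [Set.mem_ofPred_eq, Walk.support_map]
    exact List.mem_map_of_mem (mem_support_cycleGraph_cycle i)

-- This circulant graph is `K₃,₃`, seen as a hexagon with its long diagonals.
lemma exists_spanning_trail_circulantGraph {d : Fin 6} (hd : d ≠ 0) :
    ∃ T : (circulantGraph ({1, 3} : Set (Fin 6))).Walk 0 d, T.IsTrail ∧ ∀ k, k ∈ T.support := by
  simp only [Walk.isTrail_def]
  fin_cases d
  · exact absurd rfl hd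
  · exact ⟨.cons (v := 5) (by decide) <| .cons (v := 4) (by decide) <|
      .cons (v := 3) (by decide) <| .cons (v := 2) (by decide) <|
      .cons (v := 1) (by decide) .nil, by decide⟩
  · exact ⟨.cons (v := 5) (by decide) <| .cons (v := 4) (by decide) <|
      .cons (v := 3) (by decide) <| .cons (v := 0) (by decide) <| .cons (v := 1) (by decide) <|
      .cons (v := 2) (by decide) .nil, by decide⟩
  · exact ⟨.cons (v := 1) (by decide) <| .cons (v := 2) (by decide) <|
      .cons (v := 5) (by decide) <| .cons (v := 4) (by decide) <|
      .cons (v := 3) (by decide) .nil, by decide⟩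
  · exact ⟨.cons (v := 1) (by decide) <| .cons (v := 2) (by decide) <|
      .cons (v := 3) (by decide) <| .cons (v := 0) (by decide) <| .cons (v := 5) (by decide) <|
      .cons (v := 4) (by decide) .nil, by decide⟩
  · exact ⟨.cons (v := 1) (by decide) <| .cons (v := 2) (by decide) <|
      .cons (v := 3) (by decide) <| .cons (v := 4) (by decide) <|
      .cons (v := 5) (by decide) .nil, by decide⟩

lemma spanningTrailConnected_range_of_sides_of_diagonals {v : Fin 6 → V} (hv : Function.Injective v)
    (hside : ∀ i, H.Adj (v i) (v (i + 1))) (hdiag : ∀ i, H.Adj (v i) (v (i + 3))) :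
    SpanningTrailConnected H (Set.range v) := by
  rintro _ ⟨i, rfl⟩ _ ⟨j, rfl⟩ hij
  let f : circulantGraph ({1, 3} : Set (Fin 6)) →g H := circulantHom _ (fun k ↦ v (k + i)) (by
    rintro j (rfl | rfl) k
    · simpa [add_assoc, add_comm, add_left_comm] using hside (k + i)
    · simpa [add_assoc, add_comm, add_left_comm] using hdiag (k + i))
  obtain ⟨T, hT, hTsupp⟩ :=
    exists_spanning_trail_circulantGraph (sub_ne_zero.2 (ne_of_apply_ne v hij).symm)
  have hstart : f 0 = v i := congrArg v (zero_add i)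
  have hend : f (j - i) = v j := congrArg v (sub_add_cancel j i)
  refine ⟨(T.map f).copy hstart hend, ?_, ?_⟩
  · rw [Walk.isTrail_copy, Walk.isTrail_map_iff_of_injective]
    · exact hT
    · exact hv.comp (add_left_injective i)
  · ext z
    rw [Set.mem_ofPred_eq, Walk.support_copy, Walk.support_map, List.mem_map]
    constructor
    · rintro ⟨k, -, rfl⟩
      exact ⟨k + i, rfl⟩
    · rintro ⟨k, rfl⟩
      exact ⟨k - i, hTsupp _, congrArg v (sub_add_cancel k i)⟩

section Hexagon

variable {a b c d e f : V}

/-- The cyclic order `a, e, f, b, d, c` of the endpoints of three edges `ab`, `cd`, `ef`. If `ab` is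
joined to the other two by `ac`, `bd`, `ae`, `bf`, then consecutive vertices are adjacent, and `ab`
is a long diagonal. -/
def hexagon (a b c d e f : V) : Fin 6 → V := ![a, e, f, b, d, c]

lemma hexagon_injective (hab : a ≠ b) (hcd : c ≠ d) (hef : e ≠ f)
    (hn₁₂ : EdgesNonadj s(a, b) s(c, d)) (hn₁₃ : EdgesNonadj s(a, b) s(e, f))
    (hn₂₃ : EdgesNonadj s(c, d) s(e, f)) : Function.Injective (hexagon a b c d e f) := by
  simp only [EdgesNonadj, Sym2.mem_iff] at hn₁₂ hn₁₃ hn₂₃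
  simp only [hexagon, ← List.nodup_ofFn, List.ofFn_succ, List.ofFn_zero, List.nodup_cons,
    List.nodup_nil, List.mem_cons, List.not_mem_nil, Fin.isValue, Fin.succ_zero_eq_one,
    Fin.succ_one_eq_two, Fin.reduceSucc, Matrix.cons_val_zero, Matrix.cons_val_one,
    Matrix.cons_val]
  grind

lemma range_hexagon :
    Set.range (hexagon a b c d e f) = (s(a, b) : Set V) ∪ s(c, d) ∪ s(e, f) := by
  ext z
  simp only [hexagon, Matrix.range_cons, Matrix.range_empty, Set.mem_union, SetLike.mem_coe,
    Sym2.mem_iff, Set.mem_singleton_iff, Set.mem_empty_iff_false]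
  tauto

lemma exists_isDCT_of_hexagon [Finite V] (hH : EssentiallyTwoEdgeConnected H)
    (htf : H.CliqueFree 3) (hab : H.Adj a b) (hcd : H.Adj c d) (hef : H.Adj e f)
    (hn₁₂ : EdgesNonadj s(a, b) s(c, d)) (hn₁₃ : EdgesNonadj s(a, b) s(e, f))
    (hn₂₃ : EdgesNonadj s(c, d) s(e, f))
    (hac : H.Adj a c) (hbd : H.Adj b d) (hae : H.Adj a e) (hbf : H.Adj b f)
    (hfew : (H.edgeSet \ edgesMeeting H (s(a, b) ∪ s(c, d) ∪ s(e, f))).ncard + 1 ≤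
      (edgesMeeting H s(c, d) ∩ edgesMeeting H s(e, f)).ncard) :
    ∃ (v : V) (w : H.Walk v v), IsDCT H w := by
  have hinj := hexagon_injective hab.ne hcd.ne hef.ne hn₁₂ hn₁₃ hn₂₃
  have hside : ∀ i, H.Adj (hexagon a b c d e f i) (hexagon a b c d e f (i + 1)) := by
    intro i
    fin_cases i
    exacts [hae, hef, hbf.symm, hbd, hcd.symm, hac.symm]
  rw [← range_hexagon] at hfew
  rcases (H.edgeSet \ edgesMeeting H (Set.range (hexagon a b c d e f))).eq_empty_or_nonempty
    with hempty | hne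
  · exact exists_isDCT_of_cycle hinj hside (Set.sdiff_eq_empty.1 hempty)
  have hpos := hne.ncard_pos
  have htwo := ncard_edgesMeeting_inter_le_two htf hcd hef hn₂₃
  obtain ⟨g, hg⟩ := Set.ncard_eq_one.1 (by omega :
    (H.edgeSet \ edgesMeeting H (Set.range (hexagon a b c d e f))).ncard = 1)
  obtain ⟨hcf, hde⟩ : H.Adj c f ∧ H.Adj d e := by
    obtain ⟨e', f', heq, hce', hdf'⟩ :=
      exists_adj_adj_of_two_le_ncard htf hcd hef hn₂₃ (by omega)
    rcases Sym2.eq_iff.1 heq with ⟨rfl, rfl⟩ | ⟨rfl, rfl⟩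
    · exact absurd hce' (not_adj_of_adj_of_adj htf hac hae)
    · exact ⟨hce', hdf'⟩
  have hdiag : ∀ i, H.Adj (hexagon a b c d e f i) (hexagon a b c d e f (i + 3)) := by
    intro i
    fin_cases i
    exacts [hab, hde.symm, hcf.symm, hab.symm, hde, hcf]
  induction g with | _ x y
  have hconn := spanningTrailConnected_range_of_sides_of_diagonals hinj hside hdiag
  exact hconn.exists_isDCT hH htf hab ⟨0, rfl⟩ ⟨3, rfl⟩ hg

end Hexagon

section Matching

variable {e₁ e₂ e₃ : Sym2 V}

lemma EdgesNonadj.symm (h : EdgesNonadj e₁ e₂) : EdgesNonadj e₂ e₁ :=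
  fun v hv hv' ↦ h v hv' hv

lemma exists_isDCT_of_two_le_ncard_inter [Finite V] (hH : EssentiallyTwoEdgeConnected H)
    (htf : H.CliqueFree 3) (he₁ : e₁ ∈ H.edgeSet) (he₂ : e₂ ∈ H.edgeSet) (he₃ : e₃ ∈ H.edgeSet)
    (hn₁₂ : EdgesNonadj e₁ e₂) (hn₁₃ : EdgesNonadj e₁ e₃) (hn₂₃ : EdgesNonadj e₂ e₃)
    (htwo₁₂ : 2 ≤ (edgesMeeting H e₁ ∩ edgesMeeting H e₂).ncard)
    (htwo₁₃ : 2 ≤ (edgesMeeting H e₁ ∩ edgesMeeting H e₃).ncard)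
    (hfew : (H.edgeSet \ edgesMeeting H (e₁ ∪ e₂ ∪ e₃)).ncard + 1 ≤
      (edgesMeeting H e₂ ∩ edgesMeeting H e₃).ncard) :
    ∃ (v : V) (w : H.Walk v v), IsDCT H w := by
  induction e₁ with | _ a b
  obtain ⟨c, d, rfl, hac, hbd⟩ := exists_adj_adj_of_two_le_ncard htf he₁ he₂ hn₁₂ htwo₁₂
  obtain ⟨e, f, rfl, hae, hbf⟩ := exists_adj_adj_of_two_le_ncard htf he₁ he₃ hn₁₃ htwo₁₃
  exact exists_isDCT_of_hexagon hH htf he₁ he₂ he₃ hn₁₂ hn₁₃ hn₂₃ hac hbd hae hbf hfew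

lemma exists_isDCT_of_five_le_sum_ncard_inter [Finite V] (hH : EssentiallyTwoEdgeConnected H)
    (htf : H.CliqueFree 3) (he₁ : e₁ ∈ H.edgeSet) (he₂ : e₂ ∈ H.edgeSet) (he₃ : e₃ ∈ H.edgeSet)
    (hn₁₂ : EdgesNonadj e₁ e₂) (hn₁₃ : EdgesNonadj e₁ e₃) (hn₂₃ : EdgesNonadj e₂ e₃)
    (hfive : (H.edgeSet \ edgesMeeting H (e₁ ∪ e₂ ∪ e₃)).ncard + 5 ≤
      (edgesMeeting H e₁ ∩ edgesMeeting H e₂).ncard +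
        (edgesMeeting H e₁ ∩ edgesMeeting H e₃).ncard +
        (edgesMeeting H e₂ ∩ edgesMeeting H e₃).ncard) :
    ∃ (v : V) (w : H.Walk v v), IsDCT H w := by
  have hle₁₂ := ncard_edgesMeeting_inter_le_two htf he₁ he₂ hn₁₂
  have hle₁₃ := ncard_edgesMeeting_inter_le_two htf he₁ he₃ hn₁₃
  have hle₂₃ := ncard_edgesMeeting_inter_le_two htf he₂ he₃ hn₂₃
  wlog htwo₁₂ : 2 ≤ (edgesMeeting H e₁ ∩ edgesMeeting H e₂).ncard generalizing e₁ e₂ e₃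
  · refine this he₁ he₃ he₂ hn₁₃ hn₁₂ hn₂₃.symm ?_ hle₁₃ hle₁₂ ?_ (by omega)
    · rw [Set.union_right_comm, Set.inter_comm (edgesMeeting H e₃)]
      omega
    · rwa [Set.inter_comm]
  by_cases htwo₁₃ : 2 ≤ (edgesMeeting H e₁ ∩ edgesMeeting H e₃).ncard
  · exact exists_isDCT_of_two_le_ncard_inter hH htf he₁ he₂ he₃ hn₁₂ hn₁₃ hn₂₃ htwo₁₂ htwo₁₃
      (by omega)
  · rw [Set.inter_comm] at htwo₁₂
    refine exists_isDCT_of_two_le_ncard_inter hH htf he₂ he₁ he₃ hn₁₂.symm hn₂₃ hn₁₃ htwo₁₂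
      (by omega) ?_
    rw [Set.union_comm (e₂ : Set V)]
    omega

end Matching

end Graph

/-- In an essentially 2-edge-connected triangle-free graph with `n` edges and no
dominating closed trail, any matching of three edges has total edge-degree at
most `n + 1`. -/
theorem matching_edgeDeg_bound {V : Type*} [Fintype V] (H : SimpleGraph V)
    (hH : EssentiallyTwoEdgeConnected H) (htf : H.CliqueFree 3)
    (hnoDCT : ¬ ∃ (v : V) (w : H.Walk v v), IsDCT H w)
    (e₁ e₂ e₃ : Sym2 V)
    (he₁ : e₁ ∈ H.edgeSet) (he₂ : e₂ ∈ H.edgeSet) (he₃ : e₃ ∈ H.edgeSet)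
    (h12 : EdgesNonadj e₁ e₂) (h13 : EdgesNonadj e₁ e₃) (h23 : EdgesNonadj e₂ e₃) :
    edgeDeg H e₁ + edgeDeg H e₂ + edgeDeg H e₃ ≤ H.edgeSet.ncard + 1 := by
  by_contra hlt
  have hcount := sum_edgeDeg_add_ncard_le he₁ he₂ he₃
  exact hnoDCT <|
    exists_isDCT_of_five_le_sum_ncard_inter hH htf he₁ he₂ he₃ h12 h13 h23 (by omega)
end
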